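/- arXiv:2206.07017 — 4 statements merged into one kernel-verified Lean document; each statement's English description precedes it below -/
import Mathlib

section
/- Let α be a countable ordinal, δ = ω^(α+1), X = [1, δ] with the order topology, G the group of homeomorphisms of X, A_n = [ω^α·(n−1)+1, ω^α·n] for n ≥ 1, π : G → Sym({1,2,…}) the homomorphism determined by π(g)(m) = n iff g(ω^α·m) = ω^α·n, and K* the kernel of π. Let g ∈ G be such that σ = π(g) acts on {1,2,…} as a single infinite cycle, and let f be any function assigning to each i ≥ 1 an ordered pair f(i) of bounded clopen subsets of [1, ω^α]. Then there exists h ∈ K* such that for every i ≥ 1, (P_i(h⁻¹gh), Q_i(h⁻¹gh)) ∼ f(i), where P_n(k) = A_{π(k)(n)} \ k(A_n) and Q_n(k) = A_n \ k⁻¹(A_{π(k)(n)}). -/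
open Ordinal Topology

noncomputable section

/-- The ordinal interval `[1, γ]`, i.e. the set of ordinals `β` with `1 ≤ β ≤ γ`, with the
subspace topology induced from the order topology on `Ordinal` (equivalently, its order
topology, since it is order-connected). -/
abbrev OrdIcc (γ : Ordinal) : Type _ := ↥(Set.Icc (1 : Ordinal) γ)

/-- `X = [1, δ]` where `δ = ω^(α+1)`. -/
abbrev Xsp (α : Ordinal) : Type _ := OrdIcc (omega0 ^ (α + 1))

lemma omega_pow_mul_mem (α : Ordinal) (m : ℕ+) :
    omega0 ^ α * ((m : ℕ) : Ordinal) ∈ Set.Icc (1 : Ordinal) (omega0 ^ (α + 1)) := by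
  constructor
  · have h1 : (1 : Ordinal) ≤ omega0 ^ α := Order.one_le_iff_pos.2 (opow_pos _ omega0_pos)
    have h2 : (1 : Ordinal) ≤ ((m : ℕ) : Ordinal) := by exact_mod_cast m.one_le
    calc (1 : Ordinal) = 1 * 1 := (one_mul 1).symm
      _ ≤ omega0 ^ α * ((m : ℕ) : Ordinal) := mul_le_mul' h1 h2
  · rw [Ordinal.add_one_eq_succ, Ordinal.opow_succ]
    exact mul_le_mul' le_rfl (Ordinal.nat_lt_omega0 m).le

/-- The point `ω^α·m` of `X` (for `m ≥ 1`). -/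
def pt (α : Ordinal) (m : ℕ+) : Xsp α :=
  ⟨omega0 ^ α * ((m : ℕ) : Ordinal), omega_pow_mul_mem α m⟩

/-- `A_n = [ω^α·(n−1)+1, ω^α·n]`, as a subset of `X`. -/
def Ablock (α : Ordinal) (n : ℕ+) : Set (Xsp α) :=
  {x : Xsp α | (x : Ordinal) ∈
    Set.Icc (omega0 ^ α * (((n : ℕ) - 1 : ℕ) : Ordinal) + 1) (omega0 ^ α * ((n : ℕ) : Ordinal))}

/-- The defining property of the homomorphism `π : G → Sym({1,2,…})`:
`π(g)(m) = n` iff `g(ω^α·m) = ω^α·n`. -/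
def IsBlockPerm (α : Ordinal) (π : (Xsp α ≃ₜ Xsp α) → Equiv.Perm ℕ+) : Prop :=
  ∀ (g : Xsp α ≃ₜ Xsp α) (m : ℕ+), g (pt α m) = pt α (π g m)

/-- `P_i(g) = A_{π(g)(i)} \ g(A_i)`. -/
def Pset (α : Ordinal) (π : (Xsp α ≃ₜ Xsp α) → Equiv.Perm ℕ+)
    (g : Xsp α ≃ₜ Xsp α) (i : ℕ+) : Set (Xsp α) :=
  Ablock α (π g i) \ (⇑g '' Ablock α i)

/-- `Q_i(g) = A_i \ g⁻¹(A_{π(g)(i)})`. -/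
def Qset (α : Ordinal) (π : (Xsp α ≃ₜ Xsp α) → Equiv.Perm ℕ+)
    (g : Xsp α ≃ₜ Xsp α) (i : ℕ+) : Set (Xsp α) :=
  Ablock α i \ (⇑g ⁻¹' Ablock α (π g i))

/-- `(P₁, Q₁) ∼ (P₂, Q₂)` iff the topological disjoint union `P₁ ⊔ Q₂` is homeomorphic
to `P₂ ⊔ Q₁`. -/
def PairSim (P₁ Q₁ P₂ Q₂ : Type*) [TopologicalSpace P₁] [TopologicalSpace Q₁]
    [TopologicalSpace P₂] [TopologicalSpace Q₂] : Prop :=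
  Nonempty ((P₁ ⊕ Q₂) ≃ₜ (P₂ ⊕ Q₁))

universe u v w

/-- Cantor–Bendixson type derivative. -/
def CB (X : Type v) [TopologicalSpace X] (γ : Ordinal.{u}) : Set X :=
  {x | ∀ β, ∀ _h : β < γ, AccPt x (Filter.principal (CB X β))}
termination_by γ
decreasing_by exact _h

lemma mem_CB {X : Type v} [TopologicalSpace X] {γ : Ordinal.{u}} {x : X} :
    x ∈ CB X γ ↔ ∀ β < γ, AccPt x (Filter.principal (CB X β)) := by
  rw [CB]; rfl

lemma CB_anti {X : Type v} [TopologicalSpace X] {γ γ' : Ordinal.{u}} (h : γ ≤ γ') :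
    CB X γ' ⊆ CB X γ := by
  intro x hx
  rw [mem_CB] at hx ⊢
  exact fun β hβ => hx β (hβ.trans_le h)

lemma CB_emb {X : Type v} {Y : Type w} [TopologicalSpace X] [TopologicalSpace Y] {e : X → Y}
    (he : IsOpenEmbedding e) (γ : Ordinal.{u}) : ∀ x, e x ∈ CB Y γ ↔ x ∈ CB X γ := by
  induction γ using WellFoundedLT.induction with
  | ind γ ih =>
  intro x
  rw [mem_CB, mem_CB]
  refine forall_congr' fun β => forall_congr' fun hβ => ?_
  rw [accPt_iff_nhds, accPt_iff_nhds]
  constructor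
  · intro h U hU
    obtain ⟨y, ⟨⟨z, hz, rfl⟩, hy2⟩, hy3⟩ := h (e '' U) (he.image_mem_nhds.2 hU)
    exact ⟨z, ⟨hz, (ih β hβ z).1 hy2⟩, fun h => hy3 (h ▸ rfl)⟩
  · intro h U hU
    obtain ⟨z, ⟨hz, hz2⟩, hz3⟩ := h (e ⁻¹' U) (he.continuous.continuousAt hU)
    exact ⟨e z, ⟨hz, (ih β hβ z).2 hz2⟩, fun h => hz3 (he.injective h)⟩

lemma acc_dvd (δ : Ordinal.{u}) (β : Ordinal.{u}) (x : OrdIcc δ) :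
    AccPt x (Filter.principal {y : OrdIcc δ | omega0 ^ β ∣ (y : Ordinal)}) ↔
      omega0 ^ (β + 1) ∣ (x : Ordinal) := by
  have hpos : (0 : Ordinal) < omega0 ^ β := opow_pos _ omega0_pos
  have hx1 : (0 : Ordinal) < x := Order.one_le_iff_pos.1 x.2.1
  rw [accPt_iff_nhds]
  constructor
  · intro h
    have key : ∀ l : Ordinal, l < x → ∃ k : Ordinal, l < omega0 ^ β * k ∧ omega0 ^ β * k < x := by
      intro l hl
      obtain ⟨y, ⟨hy, hy2⟩, hy3⟩ := h {y | l < (y : Ordinal) ∧ (y : Ordinal) < Order.succ (x : Ordinal)} (by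
        refine IsOpen.mem_nhds ?_ ⟨hl, Order.lt_succ _⟩
        exact (isOpen_Ioi.preimage continuous_subtype_val).inter
          (isOpen_Iio.preimage continuous_subtype_val))
      obtain ⟨k, hk⟩ := hy2
      refine ⟨k, hk ▸ hy.1, hk ▸ lt_of_le_of_ne (Order.lt_succ_iff.1 hy.2) ?_⟩
      exact fun h => hy3 (Subtype.ext h)
    set q := (x : Ordinal) / omega0 ^ β with hq
    have hdm := div_add_mod (x : Ordinal) (omega0 ^ β)
    have hr : (x : Ordinal) % omega0 ^ β = 0 := by
      by_contra hr
      obtain ⟨k, hk1, hk2⟩ := key (omega0 ^ β * q) (by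
        conv_rhs => rw [← hdm]
        exact lt_add_of_pos_right _ (pos_iff_ne_zero.2 hr))
      have h1 : q < k := lt_of_mul_lt_mul_left' hk1
      have h2 : k ≤ q := (mul_le_iff_le_div hpos.ne').1 hk2.le
      exact absurd h1 h2.not_gt
    rw [hr, add_zero] at hdm
    have hlim : ω ∣ q := by
      rw [← isSuccPrelimit_iff_omega0_dvd]
      intro k hk
      have := hk.lt
      obtain ⟨m, hm1, hm2⟩ := key (omega0 ^ β * k) (by
        rw [← hdm]; exact (mul_lt_mul_iff_right₀ hpos).2 hk.lt)
      have h1 : k < m := lt_of_mul_lt_mul_left' hm1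
      rw [← hdm] at hm2
      have h2 : m < q := lt_of_mul_lt_mul_left' hm2
      exact hk.2 h1 h2
    rw [← hdm, opow_add, opow_one]
    exact mul_dvd_mul_left _ hlim
  · rintro ⟨k, hk⟩ U hU
    rw [opow_add, opow_one, mul_assoc] at hk
    obtain ⟨V, hV, hVU⟩ := mem_nhds_induced _ _ _ |>.1 hU
    obtain ⟨l, hl, hlV⟩ := exists_Ioc_subset_of_mem_nhds hV ⟨0, hx1⟩
    have hk0 : 0 < k := by
      rw [pos_iff_ne_zero]; rintro rfl
      simp at hk; exact hx1.ne' hk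
    have hlim : Order.IsSuccLimit (ω * k) := isSuccLimit_mul_left isSuccLimit_omega0 hk0
    obtain ⟨c, hc, hlc⟩ := (lt_mul_iff_of_isSuccLimit hlim).1 (hk ▸ hl)
    have hcx : omega0 ^ β * c < x := by
      rw [hk]; exact (mul_lt_mul_iff_right₀ hpos).2 hc
    refine ⟨⟨omega0 ^ β * c, ?_, hcx.le.trans x.2.2⟩, ⟨hVU (hlV ⟨hlc, hcx.le⟩), Dvd.intro _ rfl⟩, ?_⟩
    · exact Order.one_le_iff_pos.2 (lt_of_le_of_lt (zero_le) hlc)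
    · intro h; exact hcx.ne (congrArg Subtype.val h)

lemma CB_ord (δ γ : Ordinal.{u}) : CB (OrdIcc δ) γ = {x : OrdIcc δ | omega0 ^ γ ∣ (x : Ordinal)} := by
  induction γ using WellFoundedLT.induction with
  | ind γ ih =>
  ext x
  rw [mem_CB, Set.mem_setOf_eq]
  have : (∀ β < γ, AccPt x (Filter.principal (CB (OrdIcc δ) β))) ↔
      ∀ β < γ, omega0 ^ (β + 1) ∣ (x : Ordinal) := by
    refine forall_congr' fun β => forall_congr' fun hβ => ?_
    rw [ih β hβ, acc_dvd]
  rw [this]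
  constructor
  · intro h
    rcases zero_or_succ_or_isSuccLimit γ with rfl | ⟨β, rfl⟩ | hlim
    · simp
    · exact h β (Order.lt_succ _)
    · have hpos : (0 : Ordinal) < omega0 ^ γ := opow_pos _ omega0_pos
      have hdm := div_add_mod (x : Ordinal) (omega0 ^ γ)
      obtain ⟨β, hβ, hlt⟩ := (lt_opow_of_isSuccLimit omega0_ne_zero hlim).1 (mod_lt (x : Ordinal) hpos.ne')
      have h1 : omega0 ^ β ∣ (x : Ordinal) :=
        (opow_dvd_opow _ le_self_add).trans (h β hβ)
      rw [← hdm, dvd_add_iff (Dvd.dvd.mul_right (opow_dvd_opow _ hβ.le) _)] at h1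
      have h2 : (x : Ordinal) % omega0 ^ γ = 0 := by
        by_contra h0
        exact absurd hlt (le_of_dvd h0 h1).not_gt
      rw [← hdm, h2, add_zero]
      exact Dvd.intro _ rfl
  · intro h β hβ
    exact (opow_dvd_opow _ (Order.add_one_le_of_lt hβ)).trans h

/-- homeomorphic to an ordinal interval -/
def IsO (Y : Type v) [TopologicalSpace Y] : Prop :=
  ∃ z : Ordinal.{u}, Nonempty (Y ≃ₜ OrdIcc z)

lemma IsO.congr {Y : Type v} {Z : Type w} [TopologicalSpace Y] [TopologicalSpace Z]
    (h : IsO.{u} Y) (e : Y ≃ₜ Z) : IsO.{u} Z := by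
  obtain ⟨z, ⟨f⟩⟩ := h
  exact ⟨z, ⟨e.symm.trans f⟩⟩

lemma IsO.compact {Y : Type v} [TopologicalSpace Y] (h : IsO.{u} Y) : CompactSpace Y := by
  obtain ⟨z, ⟨f⟩⟩ := h
  exact f.symm.compactSpace

lemma ordSum (a b : Ordinal.{u}) : Nonempty ((OrdIcc a ⊕ OrdIcc b) ≃ₜ OrdIcc (a + b)) := by
  let F : OrdIcc a ⊕ OrdIcc b → OrdIcc (a + b) := Sum.elim
    (fun x => ⟨x, x.2.1, x.2.2.trans le_self_add⟩)
    (fun y => ⟨a + y, y.2.1.trans le_add_self, by gcongr; exact y.2.2⟩)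
  have hc : Continuous F := by
    refine Continuous.sumElim ?_ ?_
    · exact Continuous.subtype_mk continuous_subtype_val _
    · exact Continuous.subtype_mk ((isNormal_add_right a).continuous.comp continuous_subtype_val) _
  have hb : Function.Bijective F := by
    constructor
    · have h0 : ∀ (x : OrdIcc a) (y : OrdIcc b), (x : Ordinal) < a + y := fun x y =>
        x.2.2.trans_lt (lt_add_of_pos_right _ (Order.one_le_iff_pos.1 y.2.1))
      rintro (x | x) (y | y) h
      · have := congrArg Subtype.val h
        exact congrArg _ (Subtype.ext this)
      · exact absurd (congrArg Subtype.val h) (h0 x y).ne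
      · exact absurd (congrArg Subtype.val h) (h0 y x).ne'
      · have := congrArg Subtype.val h
        exact congrArg _ (Subtype.ext (add_left_cancel this))
    · rintro ⟨y, hy1, hy2⟩
      by_cases hya : y ≤ a
      · exact ⟨Sum.inl ⟨y, hy1, hya⟩, rfl⟩
      · push Not at hya
        have e : a + (y - a) = y := Ordinal.add_sub_cancel_of_le hya.le
        refine ⟨Sum.inr ⟨y - a, ?_, ?_⟩, Subtype.ext e⟩
        · exact Order.one_le_iff_pos.2 (pos_iff_ne_zero.2 (Ordinal.sub_ne_zero_iff_lt.2 hya))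
        · rw [Ordinal.sub_le]; exact hy2
  exact ⟨(isHomeomorph_iff_continuous_bijective.2 ⟨hc, hb⟩).homeomorph⟩

lemma IsO.sum {Y : Type v} {Z : Type w} [TopologicalSpace Y] [TopologicalSpace Z]
    (hY : IsO.{u} Y) (hZ : IsO.{u} Z) : IsO.{u} (Y ⊕ Z) := by
  obtain ⟨y, ⟨f⟩⟩ := hY
  obtain ⟨z, ⟨g⟩⟩ := hZ
  obtain ⟨s⟩ := ordSum y z
  exact ⟨y + z, ⟨(f.sumCongr g).trans s⟩⟩

lemma IsO.of_bij {Y : Type v} {Z : Type w} [TopologicalSpace Y] [TopologicalSpace Z] [T2Space Z]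
    (hY : IsO.{u} Y) (F : Y → Z) (hc : Continuous F) (hb : Function.Bijective F) : IsO.{u} Z := by
  have := hY.compact
  exact hY.congr (isHomeomorph_iff_continuous_bijective.2 ⟨hc, hb⟩).homeomorph

lemma isO_union {X : Type v} [TopologicalSpace X] [T2Space X] {E F : Set X} (hE : IsO.{u} E)
    (hF : IsO.{u} F) (hd : Disjoint E F) : IsO.{u} ↥(E ∪ F) := by
  refine (hE.sum hF).of_bij (Sum.elim (Set.inclusion Set.subset_union_left)
    (Set.inclusion Set.subset_union_right)) ?_ ?_
  · exact Continuous.sumElim (continuous_inclusion _) (continuous_inclusion _)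
  · constructor
    · rintro (x | x) (y | y) h
      · exact congrArg _ (Subtype.ext (congrArg Subtype.val h :))
      · exact absurd (congrArg Subtype.val h :) (hd.ne_of_mem x.2 y.2)
      · exact absurd (congrArg Subtype.val h :) (hd.ne_of_mem y.2 x.2).symm
      · exact congrArg _ (Subtype.ext (congrArg Subtype.val h :))
    · rintro ⟨x, hx | hx⟩
      · exact ⟨Sum.inl ⟨x, hx⟩, rfl⟩
      · exact ⟨Sum.inr ⟨x, hx⟩, rfl⟩

lemma isO_Ioc (a b : Ordinal.{u}) : IsO.{u} (Set.Ioc a (a + b)) := by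
  refine IsO.of_bij (Y := OrdIcc b) ⟨b, ⟨Homeomorph.refl _⟩⟩ (fun y => ⟨a + y,
    lt_add_of_pos_right _ (Order.one_le_iff_pos.1 y.2.1), by gcongr; exact y.2.2⟩) ?_ ?_
  · exact Continuous.subtype_mk ((isNormal_add_right a).continuous.comp continuous_subtype_val) _
  · constructor
    · intro x y h
      exact Subtype.ext (add_left_cancel (congrArg Subtype.val h :))
    · rintro ⟨y, hya, hy2⟩
      have e : a + (y - a) = y := Ordinal.add_sub_cancel_of_le hya.le
      refine ⟨⟨y - a, ?_, ?_⟩, Subtype.ext e⟩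
      · exact Order.one_le_iff_pos.2 (pos_iff_ne_zero.2 (Ordinal.sub_ne_zero_iff_lt.2 hya))
      · rw [Ordinal.sub_le]; exact hy2

lemma isClopen_Iic_ord (l : Ordinal.{u}) : IsClopen (Set.Iic l) := by
  refine ⟨isClosed_Iic, ?_⟩
  rw [← Order.Iio_succ]; exact isOpen_Iio

lemma isO_clopen_ord (y : Ordinal.{u}) : ∀ C : Set Ordinal.{u}, C ⊆ Set.Icc 1 y → IsClopen C →
    IsO.{u} C := by
  induction y using WellFoundedLT.induction with
  | ind y ih =>
  intro C hC hcl
  by_cases hy : y ∈ C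
  · have hy1 : 1 ≤ y := (hC hy).1
    obtain ⟨l, hl, hlC⟩ := exists_Ioc_subset_of_mem_nhds (hcl.isOpen.mem_nhds hy)
      ⟨0, Order.one_le_iff_pos.1 hy1⟩
    have h1 : IsO.{u} ↥(C ∩ Set.Iic l) := ih l hl _ (fun x hx => ⟨(hC hx.1).1, hx.2⟩)
      (hcl.inter (isClopen_Iic_ord l))
    have h2 := isO_Ioc l (y - l)
    rw [Ordinal.add_sub_cancel_of_le hl.le] at h2
    have h3 := isO_union h1 h2 (by
      rw [Set.disjoint_left]
      intro x hx hx2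
      exact absurd hx.2 (not_le.2 hx2.1))
    have : C ∩ Set.Iic l ∪ Set.Ioc l y = C := by
      ext x; constructor
      · rintro (h | h)
        · exact h.1
        · exact hlC h
      · intro h
        rcases le_or_gt x l with h' | h'
        · exact Or.inl ⟨h, h'⟩
        · exact Or.inr ⟨h', (hC h).2⟩
    rwa [this] at h3
  · by_cases hy0 : y = 0
    · have : IsEmpty C := ⟨fun x => by
        have := hC x.2
        rw [hy0] at this
        exact absurd (this.1.trans this.2) (by simp)⟩
      have : IsEmpty (OrdIcc (0 : Ordinal.{u})) := ⟨fun x => absurd (x.2.1.trans x.2.2) (by simp)⟩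
      exact ⟨0, ⟨Homeomorph.empty⟩⟩
    · obtain ⟨l, hl, hlC⟩ := exists_Ioc_subset_of_mem_nhds (hcl.compl.isOpen.mem_nhds hy)
        ⟨0, pos_iff_ne_zero.2 hy0⟩
      refine ih l hl C (fun x hx => ⟨(hC hx).1, ?_⟩) hcl
      by_contra hx'
      exact hlC ⟨not_le.1 hx', (hC hx).2⟩ hx

lemma isO_clopen (y : Ordinal.{u}) (C : Set (OrdIcc y)) (hC : IsClopen C) : IsO.{u} C := by
  have hcl : IsClosedEmbedding (Subtype.val : OrdIcc y → Ordinal) :=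
    isClosed_Icc.isClosedEmbedding_subtypeVal
  have hop : IsOpenEmbedding (Subtype.val : OrdIcc y → Ordinal) := by
    refine IsOpen.isOpenEmbedding_subtypeVal ?_
    have : Set.Icc (1 : Ordinal.{u}) y = Set.Ioi 0 ∩ Set.Iio (Order.succ y) := by
      ext x; simp [Order.one_le_iff_pos]
    rw [this]; exact isOpen_Ioi.inter isOpen_Iio
  have h := isO_clopen_ord y (Subtype.val '' C) (by rintro _ ⟨x, _, rfl⟩; exact x.2)
    ⟨hcl.isClosedMap _ hC.isClosed, hop.isOpenMap _ hC.isOpen⟩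
  refine h.congr (Homeomorph.symm ?_)
  exact hcl.isEmbedding.homeomorphImage C

lemma lt_of_CB_empty {z α : Ordinal.{u}} (h : CB (OrdIcc z) α = ∅) : z < omega0 ^ α := by
  by_contra hlt
  push Not at hlt
  have : (⟨omega0 ^ α, Order.one_le_iff_pos.2 (opow_pos _ omega0_pos), hlt⟩ : OrdIcc z) ∈
      CB (OrdIcc z) α := by
    rw [CB_ord]; exact dvd_refl _
  rw [h] at this; exact this

lemma CB_empty_of_lt {z α : Ordinal.{u}} (h : z < omega0 ^ α) : CB (OrdIcc z) α = ∅ := by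
  rw [CB_ord, Set.eq_empty_iff_forall_notMem]
  intro x hx
  exact absurd (le_of_dvd (Order.one_le_iff_pos.1 x.2.1).ne' hx) (x.2.2.trans_lt h).not_ge

lemma CB_homeo {Y : Type v} {Z : Type w} [TopologicalSpace Y] [TopologicalSpace Z] (e : Y ≃ₜ Z)
    (γ : Ordinal.{u}) : e '' CB Y γ = CB Z γ := by
  ext z
  constructor
  · rintro ⟨y, hy, rfl⟩; exact (CB_emb e.isOpenEmbedding γ y).2 hy
  · intro hz
    refine ⟨e.symm z, ?_, by simp⟩
    rw [← CB_emb e.isOpenEmbedding]; simpa using hz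

lemma CB_mult (γ : Ordinal.{u}) (m : ℕ) : (CB (OrdIcc (omega0 ^ γ * (m : Ordinal.{u}))) γ).Finite ∧
    (CB (OrdIcc (omega0 ^ γ * (m : Ordinal.{u}))) γ).ncard = m := by
  have hpos : (0 : Ordinal) < omega0 ^ γ := opow_pos _ omega0_pos
  have hmem : ∀ k : Fin m, omega0 ^ γ * ((k.val + 1 : ℕ) : Ordinal.{u}) ∈
      Set.Icc 1 (omega0 ^ γ * (m : Ordinal.{u})) := by
    intro k
    constructor
    · rw [Order.one_le_iff_pos]
      refine mul_pos hpos ?_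
      exact_mod_cast Nat.succ_pos _
    · refine mul_le_mul_right ?_ _
      exact_mod_cast k.2
  let F : Fin m → OrdIcc (omega0 ^ γ * (m : Ordinal.{u})) := fun k => ⟨_, hmem k⟩
  have hF : Function.Injective F := by
    intro a b h
    have h1 := congrArg Subtype.val h
    have h2 := mul_left_cancel₀ hpos.ne' h1
    have h3 : a.val + 1 = b.val + 1 := by exact_mod_cast h2
    exact Fin.ext (by omega)
  have hr : CB (OrdIcc (omega0 ^ γ * (m : Ordinal.{u}))) γ = Set.range F := by
    rw [CB_ord]
    ext x
    constructor
    · rintro ⟨k, hk⟩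
      have hkm : k ≤ m := by
        have := x.2.2
        rw [hk] at this
        exact (mul_le_mul_iff_right₀ hpos).1 this
      obtain ⟨n, rfl⟩ := lt_omega0.1 (hkm.trans_lt (natCast_lt_omega0 m))
      have hnm : n ≤ m := by exact_mod_cast hkm
      have hn0 : n ≠ 0 := by
        rintro rfl
        simp at hk
        exact (Order.one_le_iff_pos.1 x.2.1).ne' hk
      refine ⟨⟨n - 1, by omega⟩, Subtype.ext ?_⟩
      rw [hk]
      change omega0 ^ γ * ((n - 1 + 1 : ℕ) : Ordinal.{u}) = _
      rw [Nat.sub_add_cancel (Nat.pos_of_ne_zero hn0)]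
    · rintro ⟨k, rfl⟩
      exact Dvd.intro _ rfl
  rw [hr]
  refine ⟨Set.finite_range _, ?_⟩
  rw [← Set.image_univ, Set.ncard_image_of_injective _ hF, Set.ncard_univ]
  simp

lemma classify {Y : Type v} [TopologicalSpace Y] (hY : IsO.{u} Y) (γ : Ordinal.{u})
    (h1 : CB Y (γ + 1) = ∅) (h2 : (CB Y γ).Nonempty) :
    (CB Y γ).Finite ∧ Nonempty (Y ≃ₜ OrdIcc (omega0 ^ γ * ((CB Y γ).ncard : Ordinal.{u}))) := by
  obtain ⟨z, ⟨f⟩⟩ := hY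
  have hpos : (0 : Ordinal) < omega0 ^ γ := opow_pos _ omega0_pos
  have hz : z < omega0 ^ (γ + 1) := lt_of_CB_empty (by rw [← CB_homeo f, h1]; simp)
  have hdm := div_add_mod z (omega0 ^ γ)
  rw [opow_add, opow_one, lt_mul_iff_div_lt hpos.ne'] at hz
  obtain ⟨m, hm⟩ := lt_omega0.1 hz
  have hle : omega0 ^ γ ≤ z := by
    by_contra hlt
    have := CB_empty_of_lt (not_le.1 hlt)
    rw [← CB_homeo f, Set.image_eq_empty] at this
    rw [this] at h2
    exact Set.not_nonempty_empty h2
  have hm0 : m ≠ 0 := by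
    rintro rfl
    have : 1 ≤ z / omega0 ^ γ := by rwa [← mul_le_iff_le_div hpos.ne', mul_one]
    rw [hm] at this; simp at this
  rw [hm] at hdm
  obtain ⟨s1⟩ := ordSum (omega0 ^ γ * (m : Ordinal.{u})) (z % omega0 ^ γ)
  obtain ⟨s2⟩ := ordSum (z % omega0 ^ γ) (omega0 ^ γ * (m : Ordinal.{u}))
  rw [hdm] at s1
  rw [add_of_omega0_opow_le (mod_lt z hpos.ne')
    (by
      conv_lhs => rw [← mul_one (omega0 ^ γ)]
      refine mul_le_mul_right ?_ _
      exact_mod_cast Nat.pos_of_ne_zero hm0)] at s2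
  let e := ((f.trans s1.symm).trans (Homeomorph.sumComm _ _)).trans s2
  obtain ⟨hf, hn⟩ := CB_mult γ m
  have hcard : (CB Y γ).ncard = m := by
    rw [← hn, ← CB_homeo e, Set.ncard_image_of_injective _ e.injective]
  refine ⟨?_, ?_⟩
  · rw [← CB_homeo e] at hf
    exact hf.of_finite_image e.injective.injOn
  · rw [hcard]; exact ⟨e⟩

lemma CB_finite {Y : Type v} [TopologicalSpace Y] (hY : IsO.{u} Y) (γ : Ordinal.{u})
    (h1 : CB Y (γ + 1) = ∅) : (CB Y γ).Finite := by
  rcases (CB Y γ).eq_empty_or_nonempty with h | h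
  · rw [h]; exact Set.finite_empty
  · exact (classify hY γ h1 h).1

lemma homeo_of_count {Y : Type v} {Z : Type w} [TopologicalSpace Y] [TopologicalSpace Z]
    (hY : IsO.{u} Y) (hZ : IsO.{u} Z) (γ : Ordinal.{u})
    (hY1 : CB Y (γ + 1) = ∅) (hZ1 : CB Z (γ + 1) = ∅) (hY2 : (CB Y γ).Nonempty)
    (h : (CB Y γ).ncard = (CB Z γ).ncard) : Nonempty (Y ≃ₜ Z) := by
  obtain ⟨hf, ⟨e⟩⟩ := classify hY γ hY1 hY2
  have hZ2 : (CB Z γ).Nonempty := by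
    rw [← Set.ncard_pos hf, h] at hY2
    exact Set.nonempty_of_ncard_ne_zero hY2.ne'
  obtain ⟨_, ⟨e'⟩⟩ := classify hZ γ hZ1 hZ2
  rw [← h] at e'
  exact ⟨e.trans e'.symm⟩

lemma CB_limit {Y : Type v} [TopologicalSpace Y] (hY : IsO.{u} Y) {α : Ordinal.{u}}
    (hα : Order.IsSuccLimit α) (h : CB Y α = ∅) : ∃ γ < α, CB Y γ = ∅ := by
  obtain ⟨z, ⟨f⟩⟩ := hY
  have hz : z < omega0 ^ α := lt_of_CB_empty (by rw [← CB_homeo f, h]; simp)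
  obtain ⟨γ, hγ, hlt⟩ := (lt_opow_of_isSuccLimit omega0_ne_zero hα).1 hz
  refine ⟨γ, hγ, ?_⟩
  have := CB_empty_of_lt hlt
  rwa [← CB_homeo f, Set.image_eq_empty] at this

lemma CB_sum {Y : Type v} {Z : Type w} [TopologicalSpace Y] [TopologicalSpace Z] (γ : Ordinal.{u}) :
    CB (Y ⊕ Z) γ = Sum.inl '' CB Y γ ∪ Sum.inr '' CB Z γ := by
  ext x
  rcases x with x | x
  · rw [CB_emb IsOpenEmbedding.inl]; simp
  · rw [CB_emb IsOpenEmbedding.inr]; simp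

lemma CB_sub {X : Type v} [TopologicalSpace X] {E : Set X} (hE : IsOpen E) (γ : Ordinal.{u}) :
    Subtype.val '' CB E γ = E ∩ CB X γ := by
  ext x
  constructor
  · rintro ⟨y, hy, rfl⟩
    exact ⟨y.2, (CB_emb hE.isOpenEmbedding_subtypeVal γ y).2 hy⟩
  · rintro ⟨h1, h2⟩
    exact ⟨⟨x, h1⟩, (CB_emb hE.isOpenEmbedding_subtypeVal γ ⟨x, h1⟩).1 h2, rfl⟩

lemma glue {X : Type v} [TopologicalSpace X] [CompactSpace X] [T2Space X] (p : X)
    (A B : ℕ → Set X) (hA : ∀ n, IsClopen (A n)) (hB : ∀ n, IsClopen (B n))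
    (hAd : ∀ m n x, x ∈ A m → x ∈ A n → m = n) (hBd : ∀ m n x, x ∈ B m → x ∈ B n → m = n)
    (hAu : ∀ x, x ≠ p ↔ ∃ n, x ∈ A n) (hBu : ∀ x, x ≠ p ↔ ∃ n, x ∈ B n)
    (φ : ∀ n, A n ≃ₜ B n) : ∃ h : X ≃ₜ X, ∀ n, h '' A n = B n := by
  classical
  let F : X → X := fun x => if hx : ∃ n, x ∈ A n then (φ hx.choose ⟨x, hx.choose_spec⟩ : X) else p
  have hF : ∀ n x (hx : x ∈ A n), F x = φ n ⟨x, hx⟩ := by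
    intro n x hx
    have h : ∃ n, x ∈ A n := ⟨n, hx⟩
    have e : h.choose = n := hAd _ _ x h.choose_spec hx
    have : F x = φ h.choose ⟨x, h.choose_spec⟩ := dif_pos h
    rw [this]
    have gen : ∀ (m : ℕ) (hm : x ∈ A m), m = n → (φ m ⟨x, hm⟩ : X) = φ n ⟨x, hx⟩ := by
      rintro m hm rfl; rfl
    exact gen _ _ e
  have hFp : F p = p := dif_neg (fun h => ((hAu p).2 h) rfl)
  have hFB : ∀ n x, x ∈ A n → F x ∈ B n := fun n x hx => by rw [hF n x hx]; exact Subtype.coe_prop _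
  have hinj : Function.Injective F := by
    intro x y hxy
    by_cases hx : x = p
    · by_cases hy : y = p
      · rw [hx, hy]
      · obtain ⟨n, hn⟩ := (hAu y).1 hy
        have := hFB n y hn
        rw [← hxy, hx, hFp] at this
        exact absurd rfl ((hBu p).2 ⟨n, this⟩)
    · obtain ⟨n, hn⟩ := (hAu x).1 hx
      by_cases hy : y = p
      · have := hFB n x hn
        rw [hxy, hy, hFp] at this
        exact absurd rfl ((hBu p).2 ⟨n, this⟩)
      · obtain ⟨m, hm⟩ := (hAu y).1 hy
        have h1 := hFB n x hn
        have h2 := hFB m y hm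
        rw [hxy] at h1
        obtain rfl := hBd _ _ _ h1 h2
        rw [hF n x hn, hF n y hm] at hxy
        exact congrArg Subtype.val ((φ n).injective (Subtype.ext hxy))
  have hsurjB : ∀ n y, y ∈ B n → ∃ x ∈ A n, F x = y := by
    intro n y hy
    refine ⟨(φ n).symm ⟨y, hy⟩, Subtype.coe_prop _, ?_⟩
    rw [hF n _ (Subtype.coe_prop _)]
    simp
  have hsurj : Function.Surjective F := by
    intro y
    by_cases hy : y = p
    · exact ⟨p, by rw [hFp, hy]⟩
    · obtain ⟨n, hn⟩ := (hBu y).1 hy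
      obtain ⟨x, -, hx⟩ := hsurjB n y hn
      exact ⟨x, hx⟩
  have hcont : Continuous F := by
    rw [continuous_iff_continuousAt]
    intro x
    by_cases hx : x = p
    · subst hx
      rw [ContinuousAt, hFp]
      intro U hU
      obtain ⟨W, hWU, hW, hxW⟩ := mem_nhds_iff.1 hU
      have hcomp : IsCompact Wᶜ := hW.isClosed_compl.isCompact
      obtain ⟨t, ht⟩ := hcomp.elim_finite_subcover B (fun n => (hB n).isOpen) (by
        intro y hy
        have : y ≠ x := fun h => hy (h ▸ hxW)
        exact Set.mem_iUnion.2 ((hBu y).1 this))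
      have hcl : IsClosed (⋃ n ∈ t, A n) :=
        t.finite_toSet.isClosed_biUnion (fun n _ => (hA n).isClosed)
      rw [Filter.mem_map]
      refine Filter.mem_of_superset (hcl.isOpen_compl.mem_nhds ?_) ?_
      · intro h
        obtain ⟨n, -, hn⟩ := Set.mem_iUnion₂.1 h
        exact (hAu x).2 ⟨n, hn⟩ rfl
      · intro y hy
        apply hWU
        by_contra hyW
        obtain ⟨n, hn, hyn⟩ := Set.mem_iUnion₂.1 (ht hyW)
        apply hy
        obtain ⟨z, hz, hzy⟩ := hsurjB n _ hyn
        rw [hinj hzy] at hz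
        exact Set.mem_iUnion₂.2 ⟨n, hn, hz⟩
    · obtain ⟨n, hn⟩ := (hAu x).1 hx
      have : ContinuousOn F (A n) := by
        rw [continuousOn_iff_continuous_domRestrict]
        have e : (A n).domRestrict F = fun y => (φ n y : X) := by
          ext y; exact hF n y y.2
        rw [e]; exact continuous_subtype_val.comp (φ n).continuous
      exact this.continuousAt ((hA n).isOpen.mem_nhds hn)
  refine ⟨(isHomeomorph_iff_continuous_bijective.2 ⟨hcont, hinj, hsurj⟩).homeomorph, ?_⟩
  intro n
  ext y
  constructor
  · rintro ⟨x, hx, rfl⟩; exact hFB n x hx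
  · intro hy
    obtain ⟨x, hx, h⟩ := hsurjB n y hy
    exact ⟨x, hx, h⟩

lemma idx_aux {X : Type v} (E F G : Set X) (h : (E \ F).Finite) :
    (E \ F).ncard = (E \ (F ∪ G)).ncard + ((E ∩ G) \ F).ncard := by
  rw [← Set.ncard_union_eq _ (h.subset (fun x hx => ⟨hx.1, fun h => hx.2 (Or.inl h)⟩))
    (h.subset (fun x hx => ⟨hx.1.1, hx.2⟩))]
  · congr 1; ext x; simp only [Set.mem_union, Set.mem_sdiff, Set.mem_inter_iff]; tauto
  · rw [Set.disjoint_left]; rintro x ⟨_, h1⟩ ⟨⟨_, h2⟩, _⟩; exact h1 (Or.inr h2)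

lemma idx_add {X : Type v} (E F G : Set X) (h1 : (E \ F).Finite) (h2 : (F \ E).Finite)
    (h3 : (F \ G).Finite) (h4 : (G \ F).Finite) (h5 : (E \ G).Finite) (h6 : (G \ E).Finite) :
    ((E \ F).ncard : ℤ) - (F \ E).ncard + ((F \ G).ncard - (G \ F).ncard)
      = (E \ G).ncard - (G \ E).ncard := by
  have a1 := idx_aux E F G h1
  have a2 := idx_aux F E G h2
  have a3 := idx_aux F G E h3
  have a4 := idx_aux G F E h4
  have a5 := idx_aux E G F h5
  have a6 := idx_aux G E F h6
  rw [Set.union_comm G E, Set.inter_comm F E] at a3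
  rw [Set.inter_comm G E, Set.union_comm F E] at a4
  rw [Set.union_comm G F] at a5
  rw [Set.inter_comm G F] at a6
  omega

/-- number of points of rank at least `γ` in `E` -/
def NN {X : Type v} [TopologicalSpace X] (γ : Ordinal.{u}) (E : Set X) : ℕ := (E ∩ CB X γ).ncard

lemma CB_sub_empty {X : Type v} [TopologicalSpace X] {E : Set X} (hE : IsOpen E) (γ : Ordinal.{u}) :
    CB E γ = ∅ ↔ E ∩ CB X γ = ∅ := by
  rw [← CB_sub hE, Set.image_eq_empty]

lemma CB_sub_ncard {X : Type v} [TopologicalSpace X] {E : Set X} (hE : IsOpen E) (γ : Ordinal.{u}) :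
    (CB E γ).ncard = NN γ E := by
  rw [NN, ← CB_sub hE, Set.ncard_image_of_injective _ Subtype.val_injective]

lemma fin_inter {δ : Ordinal.{u}} {E : Set (OrdIcc δ)} (hE : IsClopen E) (γ : Ordinal.{u})
    (h : E ∩ CB (OrdIcc δ) (γ + 1) = ∅) : (E ∩ CB (OrdIcc δ) γ).Finite := by
  rw [← CB_sub hE.isOpen]
  refine Set.Finite.image _ (CB_finite (isO_clopen δ E hE) γ ?_)
  rwa [CB_sub_empty hE.isOpen]

lemma img_inter {X : Type v} [TopologicalSpace X] (g : X ≃ₜ X) (E : Set X) (γ : Ordinal.{u}) :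
    (g '' E) ∩ CB X γ = g '' (E ∩ CB X γ) := by
  rw [Set.image_inter g.injective, CB_homeo]

lemma CB_sum_ncard {Y : Type v} {Z : Type w} [TopologicalSpace Y] [TopologicalSpace Z]
    (γ : Ordinal.{u}) (h1 : (CB Y γ).Finite) (h2 : (CB Z γ).Finite) :
    (CB (Y ⊕ Z) γ).ncard = (CB Y γ).ncard + (CB Z γ).ncard := by
  rw [CB_sum, Set.ncard_union_eq _ (h1.image _) (h2.image _),
    Set.ncard_image_of_injective _ Sum.inl_injective,
    Set.ncard_image_of_injective _ Sum.inr_injective]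
  rw [Set.disjoint_left]; rintro _ ⟨x, _, rfl⟩ ⟨y, _, h⟩; cases h

lemma core {δ : Ordinal.{u}} (g : OrdIcc δ ≃ₜ OrdIcc δ) (A B A' B' : Set (OrdIcc δ))
    (hA : IsClopen A) (hB : IsClopen B) (hA' : IsClopen A') (hB' : IsClopen B')
    {F₁ : Type w} {F₂ : Type w} [TopologicalSpace F₁] [TopologicalSpace F₂]
    (hF₁ : IsO.{u} F₁) (hF₂ : IsO.{u} F₂) (γ : Ordinal.{u})
    (f1 : CB F₁ (γ + 1) = ∅) (f2 : CB F₂ (γ + 1) = ∅)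
    (e1 : (A' \ g '' A) ∩ CB (OrdIcc δ) (γ + 1) = ∅)
    (e2 : (g '' A \ A') ∩ CB (OrdIcc δ) (γ + 1) = ∅)
    (e3 : (A \ B) ∩ CB (OrdIcc δ) (γ + 1) = ∅)
    (e4 : (B \ A) ∩ CB (OrdIcc δ) (γ + 1) = ∅)
    (e5 : (A' \ B') ∩ CB (OrdIcc δ) (γ + 1) = ∅)
    (e6 : (B' \ A') ∩ CB (OrdIcc δ) (γ + 1) = ∅)
    (hidx : ((NN γ (B' \ A') : ℤ) - NN γ (A' \ B')) + (NN γ (A' \ g '' A) - NN γ (g '' A \ A'))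
      - (NN γ (B \ A) - NN γ (A \ B)) = (CB F₁ γ).ncard - (CB F₂ γ).ncard)
    (hgr : NN γ (B \ A) + NN γ (A' \ g '' A) + NN γ (g '' A \ A') + (CB F₁ γ).ncard
        + (CB F₂ γ).ncard + 1 ≤ NN γ (B' \ A') ∨
      NN γ (B' \ A') + NN γ (A' \ g '' A) + NN γ (g '' A \ A') + (CB F₁ γ).ncard
        + (CB F₂ γ).ncard + 1 ≤ NN γ (B \ A)) :
    PairSim ↥(B' \ g '' B) ↥(g '' B \ B') F₁ F₂ := by
  have img : ∀ E, IsClopen E → IsClopen (g '' E) := fun E hE =>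
    ⟨g.isClosedMap _ hE.isClosed, g.isOpenMap _ hE.isOpen⟩
  have hgA := img A hA
  have hgB := img B hB
  have e3' : (g '' A \ g '' B) ∩ CB (OrdIcc δ) (γ + 1) = ∅ := by
    rw [← Set.image_sdiff g.injective, img_inter, e3, Set.image_empty]
  have e4' : (g '' B \ g '' A) ∩ CB (OrdIcc δ) (γ + 1) = ∅ := by
    rw [← Set.image_sdiff g.injective, img_inter, e4, Set.image_empty]
  have n3 : NN γ (g '' A \ g '' B) = NN γ (A \ B) := by
    rw [← Set.image_sdiff g.injective, NN, img_inter, Set.ncard_image_of_injective _ g.injective, NN]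
  have n4 : NN γ (g '' B \ g '' A) = NN γ (B \ A) := by
    rw [← Set.image_sdiff g.injective, NN, img_inter, Set.ncard_image_of_injective _ g.injective, NN]
  rw [← n3, ← n4] at hidx
  rw [← n4] at hgr
  generalize hY : g '' A = Y at *
  generalize hZ : g '' B = Z at *
  clear n3 n4 e3 e4 hA hB hY hZ img
  have emp : ∀ E F G H : Set (OrdIcc δ), E ∩ CB (OrdIcc δ) (γ + 1) = ∅ →
      F ∩ CB (OrdIcc δ) (γ + 1) = ∅ → G ∩ CB (OrdIcc δ) (γ + 1) = ∅ → H ⊆ E ∪ F ∪ G →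
      H ∩ CB (OrdIcc δ) (γ + 1) = ∅ := by
    intro E F G H hE hF hG hH
    rw [Set.eq_empty_iff_forall_notMem] at *
    rintro x ⟨hx, hx'⟩
    rcases hH hx with (h | h) | h
    · exact hE x ⟨h, hx'⟩
    · exact hF x ⟨h, hx'⟩
    · exact hG x ⟨h, hx'⟩
  have eP : (B' \ Z) ∩ CB (OrdIcc δ) (γ + 1) = ∅ := by
    refine emp _ _ _ _ e6 e1 e3' ?_
    intro x hx; simp only [Set.mem_union, Set.mem_sdiff] at hx ⊢; tauto
  have eQ : (Z \ B') ∩ CB (OrdIcc δ) (γ + 1) = ∅ := by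
    refine emp _ _ _ _ e4' e2 e5 ?_
    intro x hx; simp only [Set.mem_union, Set.mem_sdiff] at hx ⊢; tauto
  have e7 : (A' \ Z) ∩ CB (OrdIcc δ) (γ + 1) = ∅ := by
    refine emp _ _ _ _ e1 e3' e3' ?_
    intro x hx; simp only [Set.mem_union, Set.mem_sdiff] at hx ⊢; tauto
  have e8 : (Z \ A') ∩ CB (OrdIcc δ) (γ + 1) = ∅ := by
    refine emp _ _ _ _ e4' e2 e2 ?_
    intro x hx; simp only [Set.mem_union, Set.mem_sdiff] at hx ⊢; tauto
  have cP : IsClopen (B' \ Z) := hB'.diff hgB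
  have cQ : IsClopen (Z \ B') := hgB.diff hB'
  have fn : ∀ E F : Set (OrdIcc δ), IsClopen E → IsClopen F →
      (E \ F) ∩ CB (OrdIcc δ) (γ + 1) = ∅ →
      ((E ∩ CB (OrdIcc δ) γ) \ (F ∩ CB (OrdIcc δ) γ)).Finite := by
    intro E F hE hF h
    refine (fin_inter (hE.diff hF) γ h).subset ?_
    rintro x ⟨hx, hx2⟩
    exact ⟨⟨hx.1, fun h => hx2 ⟨h, hx.2⟩⟩, hx.2⟩
  have nn : ∀ E F : Set (OrdIcc δ), NN γ (E \ F) =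
      ((E ∩ CB (OrdIcc δ) γ) \ (F ∩ CB (OrdIcc δ) γ)).ncard := by
    intro E F
    rw [NN]; congr 1; ext x; simp only [Set.mem_inter_iff, Set.mem_sdiff]; tauto
  have i1 := idx_add (B' ∩ CB (OrdIcc δ) γ) (A' ∩ CB (OrdIcc δ) γ) (Z ∩ CB (OrdIcc δ) γ)
    (fn _ _ hB' hA' e6) (fn _ _ hA' hB' e5) (fn _ _ hA' hgB e7) (fn _ _ hgB hA' e8)
    (fn _ _ hB' hgB eP) (fn _ _ hgB hB' eQ)
  have i2 := idx_add (A' ∩ CB (OrdIcc δ) γ) (Y ∩ CB (OrdIcc δ) γ) (Z ∩ CB (OrdIcc δ) γ)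
    (fn _ _ hA' hgA e1) (fn _ _ hgA hA' e2) (fn _ _ hgA hgB e3') (fn _ _ hgB hgA e4')
    (fn _ _ hA' hgB e7) (fn _ _ hgB hA' e8)
  simp only [← nn] at i1 i2
  have tri : ∀ E F G H : Set (OrdIcc δ), IsClopen E → IsClopen F → IsClopen G →
      E ∩ CB (OrdIcc δ) (γ + 1) = ∅ →
      F ∩ CB (OrdIcc δ) (γ + 1) = ∅ → G ∩ CB (OrdIcc δ) (γ + 1) = ∅ → H ⊆ E ∪ F ∪ G →
      NN γ H ≤ NN γ E + NN γ F + NN γ G := by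
    intro E F G H cE cF cG hE hF hG hH
    have s1 : H ∩ CB (OrdIcc δ) γ ⊆ (E ∩ CB (OrdIcc δ) γ) ∪ (F ∩ CB (OrdIcc δ) γ) ∪
        (G ∩ CB (OrdIcc δ) γ) := by
      rintro x ⟨hx, hx'⟩
      rcases hH hx with (h | h) | h
      · exact Or.inl (Or.inl ⟨h, hx'⟩)
      · exact Or.inl (Or.inr ⟨h, hx'⟩)
      · exact Or.inr ⟨h, hx'⟩
    have s2 := Set.ncard_le_ncard s1 (((fin_inter cE γ hE).union (fin_inter cF γ hF)).union
      (fin_inter cG γ hG))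
    refine s2.trans ((Set.ncard_union_le _ _).trans ?_)
    have := Set.ncard_union_le (E ∩ CB (OrdIcc δ) γ) (F ∩ CB (OrdIcc δ) γ)
    simp only [NN]; omega
  have t1 := tri (B' \ Z) (Y \ A') (Z \ Y) (B' \ A') cP (hgA.diff hA') (hgB.diff hgA) eP e2 e4' (by
    intro x hx; simp only [Set.mem_union, Set.mem_sdiff] at hx ⊢; tauto)
  have t2 := tri (Z \ B') (A' \ Y) (B' \ A') (Z \ Y) cQ (hA'.diff hgA) (hB'.diff hA') eQ e1 e6 (by
    intro x hx; simp only [Set.mem_union, Set.mem_sdiff] at hx ⊢; tauto)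
  have cb1 : CB ↥(B' \ Z) (γ + 1) = ∅ := (CB_sub_empty cP.isOpen _).2 eP
  have cb2 : CB ↥(Z \ B') (γ + 1) = ∅ := (CB_sub_empty cQ.isOpen _).2 eQ
  have oP := isO_clopen δ _ cP
  have oQ := isO_clopen δ _ cQ
  have hs1 := CB_sum_ncard γ (CB_finite oP γ cb1) (CB_finite hF₂ γ f2)
  have hs2 := CB_sum_ncard γ (CB_finite hF₁ γ f1) (CB_finite oQ γ cb2)
  rw [CB_sub_ncard cP.isOpen] at hs1
  rw [CB_sub_ncard cQ.isOpen] at hs2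
  refine homeo_of_count (oP.sum hF₂) (hF₁.sum oQ) γ ?_ ?_ ?_ ?_
  · rw [CB_sum, cb1, f2]; simp
  · rw [CB_sum, f1, cb2]; simp
  · refine Set.nonempty_of_ncard_ne_zero ?_
    rw [hs1]; omega
  · rw [hs1, hs2]; omega

/-- half-open interval in `X` -/
def Iv (α a b : Ordinal.{u}) : Set (Xsp α) := {x | a < (x : Ordinal) ∧ (x : Ordinal) ≤ b}

lemma Iv_clopen (α a b : Ordinal.{u}) : IsClopen (Iv α a b) := by
  have h1 : IsClopen (Set.Ioi a) := by
    have := (isClopen_Iic_ord a).compl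
    rwa [Set.compl_Iic] at this
  exact (h1.preimage continuous_subtype_val).inter
    ((isClopen_Iic_ord b).preimage continuous_subtype_val)

lemma Iv_homeo (α a b : Ordinal.{u}) (h : a + b ≤ omega0 ^ (α + 1)) :
    Nonempty (OrdIcc b ≃ₜ Iv α a (a + b)) := by
  let F : OrdIcc b → Iv α a (a + b) := fun y => ⟨⟨a + y, y.2.1.trans le_add_self,
    le_trans (by gcongr; exact y.2.2) h⟩,
    lt_add_of_pos_right _ (Order.one_le_iff_pos.1 y.2.1), by
      show a + (y : Ordinal) ≤ a + b
      gcongr; exact y.2.2⟩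
  have hc : Continuous F := Continuous.subtype_mk (Continuous.subtype_mk
    ((isNormal_add_right a).continuous.comp continuous_subtype_val) _) _
  have hb : Function.Bijective F := by
    constructor
    · intro x y h
      exact Subtype.ext (add_left_cancel (congrArg (fun z : Iv α a (a + b) => ((z : Xsp α) : Ordinal)) h :))
    · rintro ⟨⟨y, hy0⟩, hya, hy2⟩
      have e : a + (y - a) = y := Ordinal.add_sub_cancel_of_le (le_of_lt hya)
      refine ⟨⟨y - a, ?_, ?_⟩, Subtype.ext (Subtype.ext e)⟩
      · exact Order.one_le_iff_pos.2 (pos_iff_ne_zero.2 (Ordinal.sub_ne_zero_iff_lt.2 hya))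
      · rw [Ordinal.sub_le]; exact hy2
  exact ⟨(isHomeomorph_iff_continuous_bijective.2 ⟨hc, hb⟩).homeomorph⟩

/-- number of multiples of `ω^γ` in `[1,b]` -/
def mu (γ b : Ordinal.{u}) : ℕ := (CB (OrdIcc b) γ).ncard

lemma NN_Iv (α a b γ : Ordinal.{u}) (h : a + b ≤ omega0 ^ (α + 1)) :
    NN γ (Iv α a (a + b)) = mu γ b := by
  obtain ⟨e⟩ := Iv_homeo α a b h
  rw [← CB_sub_ncard (Iv_clopen α a _).isOpen, ← CB_homeo e,
    Set.ncard_image_of_injective _ e.injective, mu]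

lemma Iv_free (α a b γ : Ordinal.{u}) (h : a + b ≤ omega0 ^ (α + 1)) (hb : b < omega0 ^ γ) :
    Iv α a (a + b) ∩ CB (Xsp α) γ = ∅ := by
  obtain ⟨e⟩ := Iv_homeo α a b h
  rw [← CB_sub_empty (Iv_clopen α a _).isOpen, ← CB_homeo e, CB_empty_of_lt hb, Set.image_empty]

lemma mu_of_lt {γ b : Ordinal.{u}} (hb : b < omega0 ^ γ) : mu γ b = 0 := by
  rw [mu, CB_empty_of_lt hb, Set.ncard_empty]

lemma mu_zero (γ : Ordinal.{u}) : mu γ 0 = 0 := mu_of_lt (opow_pos _ omega0_pos)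

lemma mu_mul (γ : Ordinal.{u}) (m : ℕ) : mu γ (omega0 ^ γ * (m : Ordinal.{u})) = m := (CB_mult γ m).2

lemma mu_opow (γ : Ordinal.{u}) : mu γ (omega0 ^ γ) = 1 := by
  have := mu_mul γ 1
  simpa using this

/-- end points of blocks -/
def aa (α : Ordinal.{u}) (n : ℕ) : Ordinal.{u} := omega0 ^ α * (n : Ordinal.{u})

lemma aa_succ (α : Ordinal.{u}) (n : ℕ) : aa α (n + 1) = aa α n + omega0 ^ α := by
  rw [aa, aa, Nat.cast_succ, mul_add, mul_one]

lemma aa_mono (α : Ordinal.{u}) {m n : ℕ} (h : m ≤ n) : aa α m ≤ aa α n := by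
  refine mul_le_mul_right ?_ _
  exact_mod_cast h

lemma aa_lt (α : Ordinal.{u}) (n : ℕ) : aa α n < omega0 ^ (α + 1) := by
  rw [opow_add, opow_one, aa]
  exact (mul_lt_mul_iff_right₀ (opow_pos _ omega0_pos)).2 (natCast_lt_omega0 n)

/-- blocks -/
def AA (α : Ordinal.{u}) (n : ℕ) : Set (Xsp α) := Iv α (aa α n) (aa α (n + 1))

lemma Ablock_eq (α : Ordinal.{u}) (n : ℕ) : Ablock α n.succPNat = AA α n := by
  ext x
  simp only [Ablock, AA, Iv, aa, Set.mem_setOf_eq, Set.mem_Icc, Nat.succPNat_coe, Nat.succ_eq_add_one,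
    Nat.add_sub_cancel]
  rw [Order.add_one_le_iff]

lemma AA_disj (α : Ordinal.{u}) (m n : ℕ) (x : Xsp α) (hm : x ∈ AA α m) (hn : x ∈ AA α n) :
    m = n := by
  by_contra hne
  rcases lt_or_gt_of_ne hne with h | h
  · exact absurd (hm.2.trans (aa_mono α h)) (not_le.2 hn.1)
  · exact absurd (hn.2.trans (aa_mono α h)) (not_le.2 hm.1)

/-- top point -/
def top (α : Ordinal.{u}) : Xsp α :=
  ⟨omega0 ^ (α + 1), Order.one_le_iff_pos.2 (opow_pos _ omega0_pos), le_rfl⟩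

lemma AA_cover (α : Ordinal.{u}) (x : Xsp α) : x ≠ top α ↔ ∃ n, x ∈ AA α n := by
  classical
  constructor
  · intro hx
    have h1 : (x : Ordinal) < omega0 ^ α * ω := by
      have : (x : Ordinal) < omega0 ^ (α + 1) := lt_of_le_of_ne x.2.2 (fun h => hx (Subtype.ext h))
      have e : omega0 ^ (α + 1) = omega0 ^ α * ω := by rw [opow_add, opow_one]
      exact this.trans_eq e
    obtain ⟨c, hc, hxc⟩ := (lt_mul_iff_of_isSuccLimit isSuccLimit_omega0).1 h1
    obtain ⟨m, rfl⟩ := lt_omega0.1 hc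
    have hex : ∃ n, (x : Ordinal) ≤ aa α n := ⟨m, hxc.le⟩
    have hs := Nat.find_spec hex
    have hm : ∀ k, k < Nat.find hex → ¬ (x : Ordinal) ≤ aa α k := fun k hk => Nat.find_min hex hk
    rcases hn : Nat.find hex with _ | n
    · rw [hn, aa] at hs
      simp at hs
      exact absurd (x.2.1) (by rw [hs]; simp)
    · rw [hn] at hs hm
      exact ⟨n, not_le.1 (hm n (Nat.lt_succ_self n)), hs⟩
  · rintro ⟨n, hn⟩ rfl
    exact absurd hn.2 (not_le.2 (aa_lt α (n + 1)))

lemma pt_val (α : Ordinal.{u}) (n : ℕ) : ((pt α n.succPNat : Xsp α) : Ordinal) = aa α (n + 1) := rfl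

lemma AA_CB (α : Ordinal.{u}) (n : ℕ) : AA α n ∩ CB (Xsp α) α = {pt α n.succPNat} := by
  have hpos : (0 : Ordinal) < omega0 ^ α := opow_pos _ omega0_pos
  rw [CB_ord]
  ext x
  constructor
  · rintro ⟨⟨h1, h2⟩, k, hk⟩
    refine Subtype.ext ?_
    rw [pt_val, hk]
    rw [hk, aa] at h1 h2
    have h3 : (n : Ordinal) < k := lt_of_mul_lt_mul_left' h1
    have h4 : k ≤ ((n + 1 : ℕ) : Ordinal) := (mul_le_mul_iff_right₀ hpos).1 h2
    have : k = ((n + 1 : ℕ) : Ordinal) := by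
      refine le_antisymm h4 ?_
      rw [Nat.cast_succ]; exact Order.add_one_le_of_lt h3
    rw [this, aa]
  · rintro rfl
    refine ⟨⟨?_, ?_⟩, ?_⟩
    · rw [pt_val, aa_succ]; exact lt_add_of_pos_right _ hpos
    · rw [pt_val]
    · exact Dvd.intro _ rfl

lemma AA_CB_succ (α : Ordinal.{u}) (x : Xsp α) (hx : x ≠ top α) : x ∉ CB (Xsp α) (α + 1) := by
  rw [CB_ord]
  intro h
  have h1 := le_of_dvd (Order.one_le_iff_pos.1 x.2.1).ne' h
  exact hx (Subtype.ext (le_antisymm x.2.2 h1))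

lemma top_CB (α : Ordinal.{u}) : top α ∈ CB (Xsp α) (α + 1) := by
  rw [CB_ord]; exact dvd_refl _

section

variable (α : Ordinal.{u}) (p q : ℕ → Ordinal.{u})

/-- first piece, moved down -/
def VV (n : ℕ) : Set (Xsp α) := Iv α (aa α n) (aa α n + p n)

/-- second piece, moved up -/
def UU (n : ℕ) : Set (Xsp α) := Iv α (aa α n + p n) (aa α n + p n + q n)

/-- remaining piece -/
def CC (n : ℕ) : Set (Xsp α) := Iv α (aa α n + p n + q n) (aa α (n + 1))

/-- shifted second piece -/
def UP : ℕ → Set (Xsp α)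
  | 0 => ∅
  | n + 1 => UU α p q n

/-- shifted sequence -/
def prev : ℕ → Ordinal.{u}
  | 0 => 0
  | n + 1 => q n

/-- new blocks -/
def BB (n : ℕ) : Set (Xsp α) := CC α p q n ∪ (VV α p (n + 1) ∪ UP α p q n)

variable (hp : ∀ n, p n < omega0 ^ α) (hq : ∀ n, q n < omega0 ^ α)

include hp in
lemma le1 (n : ℕ) : aa α n + p n < aa α (n + 1) := by
  rw [aa_succ]; exact (add_lt_add_iff_left _).2 (hp n)

include hp hq in
lemma le2 (n : ℕ) : aa α n + p n + q n < aa α (n + 1) := by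
  rw [aa_succ, add_assoc]
  exact (add_lt_add_iff_left _).2 (isPrincipal_add_omega0_opow α (hp n) (hq n))

include hp in
lemma VV_sub (n : ℕ) : VV α p n ⊆ AA α n := fun _ hx => ⟨hx.1, hx.2.trans (le1 α p hp n).le⟩

include hp hq in
lemma UU_sub (n : ℕ) : UU α p q n ⊆ AA α n := fun _ hx =>
  ⟨lt_of_le_of_lt le_self_add hx.1, hx.2.trans (le2 α p q hp hq n).le⟩

lemma CC_sub (n : ℕ) : CC α p q n ⊆ AA α n := fun _ hx =>
  ⟨lt_of_le_of_lt (by rw [add_assoc]; exact le_self_add) hx.1, hx.2⟩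

lemma VU (n : ℕ) (x : Xsp α) (h1 : x ∈ VV α p n) (h2 : x ∈ UU α p q n) : False :=
  absurd h1.2 (not_le.2 h2.1)

lemma VC (n : ℕ) (x : Xsp α) (h1 : x ∈ VV α p n) (h2 : x ∈ CC α p q n) : False :=
  absurd (h1.2.trans le_self_add) (not_le.2 h2.1)

lemma UC (n : ℕ) (x : Xsp α) (h1 : x ∈ UU α p q n) (h2 : x ∈ CC α p q n) : False :=
  absurd h1.2 (not_le.2 h2.1)

lemma AA_split (n : ℕ) (x : Xsp α) (h : x ∈ AA α n) :
    x ∈ VV α p n ∨ x ∈ UU α p q n ∨ x ∈ CC α p q n := by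
  rcases le_or_gt (x : Ordinal) (aa α n + p n) with h1 | h1
  · exact Or.inl ⟨h.1, h1⟩
  · rcases le_or_gt (x : Ordinal) (aa α n + p n + q n) with h2 | h2
    · exact Or.inr (Or.inl ⟨h1, h2⟩)
    · exact Or.inr (Or.inr ⟨h2, h.2⟩)

lemma mem_UP (n : ℕ) (x : Xsp α) : x ∈ UP α p q n ↔ ∃ k, n = k + 1 ∧ x ∈ UU α p q k := by
  rcases n with _ | n
  · simp [UP]
  · simp only [UP]
    constructor
    · intro h; exact ⟨n, rfl, h⟩
    · rintro ⟨k, hk, h⟩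
      obtain rfl : n = k := by omega
      exact h

lemma mem_BB (n : ℕ) (x : Xsp α) : x ∈ BB α p q n ↔ x ∈ CC α p q n ∨ x ∈ VV α p (n + 1) ∨
    ∃ k, n = k + 1 ∧ x ∈ UU α p q k := by
  rw [BB, Set.mem_union, Set.mem_union, mem_UP]

include hp hq in
lemma mem_BB' (k n : ℕ) (x : Xsp α) (hx : x ∈ AA α k) : x ∈ BB α p q n ↔
    (k = n ∧ x ∈ CC α p q k) ∨ (k = n + 1 ∧ x ∈ VV α p k) ∨ (n = k + 1 ∧ x ∈ UU α p q k) := by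
  rw [mem_BB]
  constructor
  · rintro (h | h | ⟨j, rfl, h⟩)
    · obtain rfl := AA_disj _ _ _ _ hx (CC_sub _ _ _ _ h)
      exact Or.inl ⟨rfl, h⟩
    · obtain rfl := AA_disj _ _ _ _ hx (VV_sub _ _ hp _ h)
      exact Or.inr (Or.inl ⟨rfl, h⟩)
    · obtain rfl := AA_disj _ _ _ _ hx (UU_sub _ _ _ hp hq _ h)
      exact Or.inr (Or.inr ⟨rfl, h⟩)
  · rintro (⟨rfl, h⟩ | ⟨rfl, h⟩ | ⟨rfl, h⟩)
    · exact Or.inl h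
    · exact Or.inr (Or.inl h)
    · exact Or.inr (Or.inr ⟨k, rfl, h⟩)

include hp hq in
lemma BB_AA (n : ℕ) (x : Xsp α) (hx : x ∈ BB α p q n) : ∃ k, x ∈ AA α k := by
  rw [mem_BB] at hx
  rcases hx with (h | h | ⟨j, rfl, h⟩)
  · exact ⟨_, CC_sub _ _ _ _ h⟩
  · exact ⟨_, VV_sub _ _ hp _ h⟩
  · exact ⟨_, UU_sub _ _ _ hp hq _ h⟩

include hp hq in
lemma BB_disj (m n : ℕ) (x : Xsp α) (hm : x ∈ BB α p q m) (hn : x ∈ BB α p q n) : m = n := by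
  obtain ⟨k, hk⟩ := BB_AA α p q hp hq m x hm
  rw [mem_BB' α p q hp hq k _ x hk] at hm hn
  have h1 := VU α p q k x
  have h2 := VC α p q k x
  have h3 := UC α p q k x
  rcases hm with ⟨e, h⟩ | ⟨e, h⟩ | ⟨e, h⟩ <;> rcases hn with ⟨e', h'⟩ | ⟨e', h'⟩ | ⟨e', h'⟩ <;>
    first | omega | (exfalso; tauto)

include hp hq in
lemma BB_cover (hp0 : p 0 = 0) (x : Xsp α) : x ≠ top α ↔ ∃ n, x ∈ BB α p q n := by
  constructor
  · intro hx
    obtain ⟨k, hk⟩ := (AA_cover α x).1 hx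
    rcases AA_split α p q k x hk with h | h | h
    · rcases k with _ | k
      · have := h.2.trans_lt (lt_of_le_of_lt (by rw [hp0, add_zero]) hk.1)
        exact absurd this (lt_irrefl _)
      · exact ⟨k, (mem_BB _ _ _ _ _).2 (Or.inr (Or.inl h))⟩
    · exact ⟨k + 1, (mem_BB _ _ _ _ _).2 (Or.inr (Or.inr ⟨k, rfl, h⟩))⟩
    · exact ⟨k, (mem_BB _ _ _ _ _).2 (Or.inl h)⟩
  · rintro ⟨n, hn⟩
    exact (AA_cover α x).2 (BB_AA α p q hp hq n x hn)

lemma UP_clopen (n : ℕ) : IsClopen (UP α p q n) := by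
  rcases n with _ | n
  · exact isClopen_empty
  · exact Iv_clopen _ _ _

lemma BB_clopen (n : ℕ) : IsClopen (BB α p q n) :=
  (Iv_clopen _ _ _).union ((Iv_clopen _ _ _).union (UP_clopen _ _ _ _))

include hp hq in
lemma BB_diff (n : ℕ) : BB α p q n \ AA α n = VV α p (n + 1) ∪ UP α p q n := by
  ext x
  constructor
  · rintro ⟨h | h, h2⟩
    · exact absurd (CC_sub _ _ _ _ h) h2
    · exact h
  · intro h
    refine ⟨Or.inr h, fun h2 => ?_⟩
    rcases h with h | h
    · have := AA_disj _ _ _ _ h2 (VV_sub _ _ hp _ h); omega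
    · obtain ⟨k, rfl, h⟩ := (mem_UP _ _ _ _ _).1 h
      have := AA_disj _ _ _ _ h2 (UU_sub _ _ _ hp hq _ h); omega

include hp hq in
lemma AA_diff (n : ℕ) : AA α n \ BB α p q n = VV α p n ∪ UU α p q n := by
  ext x
  constructor
  · rintro ⟨h, h2⟩
    rcases AA_split α p q n x h with h' | h' | h'
    · exact Or.inl h'
    · exact Or.inr h'
    · exact absurd (Or.inl h') h2
  · intro h
    have hA : x ∈ AA α n := by
      rcases h with h | h
      · exact VV_sub _ _ hp _ h
      · exact UU_sub _ _ _ hp hq _ h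
    refine ⟨hA, fun hB => ?_⟩
    rw [mem_BB' α p q hp hq n n x hA] at hB
    have h2 := VC α p q n x
    have h3 := UC α p q n x
    rcases hB with ⟨-, hC⟩ | ⟨e, -⟩ | ⟨e, -⟩
    · rcases h with h | h <;> tauto
    · omega
    · omega

include hp in
lemma VV_free (n : ℕ) (γ : Ordinal.{u}) (h : p n < omega0 ^ γ) : VV α p n ∩ CB (Xsp α) γ = ∅ :=
  Iv_free _ _ _ _ ((le1 α p hp n).trans (aa_lt _ _)).le h

include hp hq in
lemma UU_free (n : ℕ) (γ : Ordinal.{u}) (h : q n < omega0 ^ γ) : UU α p q n ∩ CB (Xsp α) γ = ∅ :=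
  Iv_free _ _ _ _ ((le2 α p q hp hq n).trans (aa_lt _ _)).le h

include hp hq in
lemma UP_free (n : ℕ) (γ : Ordinal.{u}) (h : prev q n < omega0 ^ γ) :
    UP α p q n ∩ CB (Xsp α) γ = ∅ := by
  rcases n with _ | n
  · simp [UP]
  · exact UU_free α p q hp hq n γ h

include hp in
lemma VV_NN (n : ℕ) (γ : Ordinal.{u}) : NN γ (VV α p n) = mu γ (p n) :=
  NN_Iv _ _ _ _ ((le1 α p hp n).trans (aa_lt _ _)).le

include hp hq in
lemma UU_NN (n : ℕ) (γ : Ordinal.{u}) : NN γ (UU α p q n) = mu γ (q n) :=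
  NN_Iv _ _ _ _ ((le2 α p q hp hq n).trans (aa_lt _ _)).le

include hp hq in
lemma UP_NN (n : ℕ) (γ : Ordinal.{u}) : NN γ (UP α p q n) = mu γ (prev q n) := by
  rcases n with _ | n
  · simp [UP, prev, mu_zero, NN]
  · exact UU_NN α p q hp hq n γ

lemma NN_union {δ : Ordinal.{u}} {E F : Set (OrdIcc δ)} (hE : IsClopen E) (hF : IsClopen F)
    (γ : Ordinal.{u}) (h1 : E ∩ CB (OrdIcc δ) (γ + 1) = ∅) (h2 : F ∩ CB (OrdIcc δ) (γ + 1) = ∅)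
    (hd : ∀ x, x ∈ E → x ∈ F → False) : NN γ (E ∪ F) = NN γ E + NN γ F := by
  rw [NN, Set.union_inter_distrib_right, Set.ncard_union_eq _ (fin_inter hE γ h1) (fin_inter hF γ h2)]
  · rfl
  · rw [Set.disjoint_left]; exact fun x hx hx' => hd x hx.1 hx'.1

lemma union_free {X : Type v} {E F G : Set X} (h1 : E ∩ G = ∅) (h2 : F ∩ G = ∅) :
    (E ∪ F) ∩ G = ∅ := by
  rw [Set.union_inter_distrib_right, h1, h2, Set.union_empty]

include hp hq in
lemma S_NN (n : ℕ) (γ : Ordinal.{u}) (h1 : p (n + 1) < omega0 ^ (γ + 1))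
    (h2 : prev q n < omega0 ^ (γ + 1)) :
    NN γ (BB α p q n \ AA α n) = mu γ (p (n + 1)) + mu γ (prev q n) := by
  rw [BB_diff α p q hp hq, NN_union (E := VV α p (n + 1)) (F := UP α p q n) (Iv_clopen _ _ _) (UP_clopen _ _ _ _) γ
    (VV_free α p hp _ _ h1) (UP_free α p q hp hq _ _ h2), VV_NN α p hp, UP_NN α p q hp hq]
  intro x hx hx'
  obtain ⟨k, rfl, h⟩ := (mem_UP _ _ _ _ _).1 hx'
  have := AA_disj _ _ _ _ (VV_sub _ _ hp _ hx) (UU_sub _ _ _ hp hq _ h); omega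

include hp hq in
lemma R_NN (n : ℕ) (γ : Ordinal.{u}) (h1 : p n < omega0 ^ (γ + 1))
    (h2 : q n < omega0 ^ (γ + 1)) :
    NN γ (AA α n \ BB α p q n) = mu γ (p n) + mu γ (q n) := by
  rw [AA_diff α p q hp hq, NN_union (E := VV α p n) (F := UU α p q n) (Iv_clopen _ _ _) (Iv_clopen _ _ _) γ
    (VV_free α p hp _ _ h1) (UU_free α p q hp hq _ _ h2), VV_NN α p hp, UU_NN α p q hp hq]
  exact VU α p q n

include hp hq in
lemma S_free (n : ℕ) (γ : Ordinal.{u}) (h1 : p (n + 1) < omega0 ^ γ)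
    (h2 : prev q n < omega0 ^ γ) : (BB α p q n \ AA α n) ∩ CB (Xsp α) γ = ∅ := by
  rw [BB_diff α p q hp hq]
  exact union_free (VV_free α p hp _ _ h1) (UP_free α p q hp hq _ _ h2)

include hp hq in
lemma R_free (n : ℕ) (γ : Ordinal.{u}) (h1 : p n < omega0 ^ γ)
    (h2 : q n < omega0 ^ γ) : (AA α n \ BB α p q n) ∩ CB (Xsp α) γ = ∅ := by
  rw [AA_diff α p q hp hq]
  exact union_free (VV_free α p hp _ _ h1) (UU_free α p q hp hq _ _ h2)

include hq in
lemma prev_lt (n : ℕ) : prev q n < omega0 ^ α := by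
  rcases n with _ | n
  · exact opow_pos _ omega0_pos
  · exact hq n

include hp hq in
lemma BB_CB (n : ℕ) : BB α p q n ∩ CB (Xsp α) α = {pt α n.succPNat} := by
  have hS := S_free α p q hp hq n α (hp _) (prev_lt α q hq n)
  have hR := R_free α p q hp hq n α (hp _) (hq n)
  rw [← AA_CB]
  rw [Set.eq_empty_iff_forall_notMem] at hS hR
  ext x
  have h1 := hS x
  have h2 := hR x
  clear hS hR
  constructor
  · rintro ⟨a, b⟩
    exact ⟨by_contra fun c => h1 ⟨⟨a, c⟩, b⟩, b⟩
  · rintro ⟨a, b⟩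
    exact ⟨by_contra fun c => h2 ⟨⟨a, c⟩, b⟩, b⟩

include hp hq in
lemma exists_h (hp0 : p 0 = 0) : ∃ h : Xsp α ≃ₜ Xsp α, (∀ n, h '' AA α n = BB α p q n) ∧
    ∀ n : ℕ, h (pt α n.succPNat) = pt α n.succPNat := by
  have hφ : ∀ n, Nonempty (AA α n ≃ₜ BB α p q n) := by
    intro n
    have cA : IsClopen (AA α n) := Iv_clopen _ _ _
    have cB := BB_clopen α p q n
    have nA : (CB (AA α n) α).ncard = 1 := by
      rw [CB_sub_ncard cA.isOpen, NN, AA_CB, Set.ncard_singleton]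
    have nB : (CB (BB α p q n) α).ncard = 1 := by
      rw [CB_sub_ncard cB.isOpen, NN, BB_CB α p q hp hq, Set.ncard_singleton]
    refine homeo_of_count (isO_clopen _ _ cA) (isO_clopen _ _ cB) α ?_ ?_ ?_ (nA.trans nB.symm)
    · rw [CB_sub_empty cA.isOpen, Set.eq_empty_iff_forall_notMem]
      rintro x ⟨h1, h2⟩
      exact AA_CB_succ α x ((AA_cover α x).2 ⟨n, h1⟩) h2
    · rw [CB_sub_empty cB.isOpen, Set.eq_empty_iff_forall_notMem]
      rintro x ⟨h1, h2⟩
      exact AA_CB_succ α x ((BB_cover α p q hp hq hp0 x).2 ⟨n, h1⟩) h2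
    · refine Set.nonempty_of_ncard_ne_zero ?_
      rw [nA]; exact one_ne_zero
  obtain ⟨h, hh⟩ := glue (top α) (AA α) (BB α p q) (fun n => Iv_clopen _ _ _) (BB_clopen α p q)
    (AA_disj α) (BB_disj α p q hp hq) (AA_cover α) (BB_cover α p q hp hq hp0)
    (fun n => (hφ n).some)
  refine ⟨h, hh, fun n => ?_⟩
  have h1 := img_inter h (AA α n) α
  rw [hh, AA_CB, BB_CB α p q hp hq, Set.image_singleton] at h1
  exact (Set.singleton_injective h1).symm

end

lemma pt_inj (α : Ordinal.{u}) {a b : ℕ+} (h : pt α a = pt α b) : a = b := by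
  have h1 : omega0 ^ α * ((a : ℕ) : Ordinal.{u}) = omega0 ^ α * ((b : ℕ) : Ordinal.{u}) :=
    congrArg Subtype.val h
  have h2 := mul_left_cancel₀ (opow_pos α omega0_pos).ne' h1
  exact PNat.coe_injective (by exact_mod_cast h2)

lemma PairSim_congr {P₁ P₂ Q₁ Q₂ F₁ F₂ : Type v} [TopologicalSpace P₁] [TopologicalSpace P₂]
    [TopologicalSpace Q₁] [TopologicalSpace Q₂] [TopologicalSpace F₁] [TopologicalSpace F₂]
    (e : P₁ ≃ₜ P₂) (e' : Q₁ ≃ₜ Q₂) (h : PairSim P₂ Q₂ F₁ F₂) : PairSim P₁ Q₁ F₁ F₂ := by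
  obtain ⟨k⟩ := h
  exact ⟨((e.sumCongr (Homeomorph.refl _)).trans k).trans ((Homeomorph.refl _).sumCongr e'.symm)⟩

lemma conj_perm (α : Ordinal.{u}) (π : (Xsp α ≃ₜ Xsp α) → Equiv.Perm ℕ+) (hπ : IsBlockPerm α π)
    (g h : Xsp α ≃ₜ Xsp α) (hh : ∀ n : ℕ, h (pt α n.succPNat) = pt α n.succPNat) :
    π h = 1 ∧ ∀ i, π ((h.trans g).trans h.symm) i = π g i := by
  have hh' : ∀ i : ℕ+, h (pt α i) = pt α i := by
    intro i
    rw [← PNat.succPNat_natPred i]; exact hh _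
  constructor
  · ext i
    have := hπ h i
    rw [hh'] at this
    rw [← pt_inj α this]; rfl
  · intro i
    refine pt_inj α ?_
    rw [← hπ]
    show h.symm (g (h (pt α i))) = _
    rw [hh', hπ g, Homeomorph.symm_apply_eq, hh']

lemma reduce (α : Ordinal.{u}) (π : (Xsp α ≃ₜ Xsp α) → Equiv.Perm ℕ+) (hπ : IsBlockPerm α π)
    (g : Xsp α ≃ₜ Xsp α) (σ : Equiv.Perm ℕ) (hσ : ∀ n : ℕ, π g n.succPNat = (σ n).succPNat)
    (F₁ F₂ : ℕ → Set (OrdIcc (omega0 ^ α))) (hF₁ : ∀ n, IsClopen (F₁ n))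
    (hF₂ : ∀ n, IsClopen (F₂ n))
    (p q : ℕ → Ordinal.{u})
    (hp : ∀ n, p n < omega0 ^ α) (hq : ∀ n, q n < omega0 ^ α) (hp0 : p 0 = 0)
    (H : ∀ n, ∃ γ : Ordinal.{u}, CB (F₁ n) (γ + 1) = ∅ ∧ CB (F₂ n) (γ + 1) = ∅ ∧
      (AA α (σ n) \ g '' AA α n) ∩ CB (Xsp α) (γ + 1) = ∅ ∧
      (g '' AA α n \ AA α (σ n)) ∩ CB (Xsp α) (γ + 1) = ∅ ∧
      (∀ k, k = n ∨ k = σ n → p k < omega0 ^ (γ + 1) ∧ p (k + 1) < omega0 ^ (γ + 1) ∧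
        q k < omega0 ^ (γ + 1) ∧ prev q k < omega0 ^ (γ + 1)) ∧
      (((mu γ (p (σ n + 1)) + mu γ (prev q (σ n)) : ℕ) : ℤ) - (mu γ (p (σ n)) + mu γ (q (σ n)) : ℕ))
        + (NN γ (AA α (σ n) \ g '' AA α n) - NN γ (g '' AA α n \ AA α (σ n)))
        - ((mu γ (p (n + 1)) + mu γ (prev q n) : ℕ) - (mu γ (p n) + mu γ (q n) : ℕ))
        = (CB (F₁ n) γ).ncard - (CB (F₂ n) γ).ncard ∧
      ((mu γ (p (n + 1)) + mu γ (prev q n)) + NN γ (AA α (σ n) \ g '' AA α n)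
          + NN γ (g '' AA α n \ AA α (σ n)) + (CB (F₁ n) γ).ncard + (CB (F₂ n) γ).ncard + 1
          ≤ mu γ (p (σ n + 1)) + mu γ (prev q (σ n)) ∨
       (mu γ (p (σ n + 1)) + mu γ (prev q (σ n))) + NN γ (AA α (σ n) \ g '' AA α n)
          + NN γ (g '' AA α n \ AA α (σ n)) + (CB (F₁ n) γ).ncard + (CB (F₂ n) γ).ncard + 1
          ≤ mu γ (p (n + 1)) + mu γ (prev q n))) :
    ∃ h : Xsp α ≃ₜ Xsp α, π h = 1 ∧ ∀ n : ℕ,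
      PairSim ↥(Pset α π ((h.trans g).trans h.symm) n.succPNat)
        ↥(Qset α π ((h.trans g).trans h.symm) n.succPNat) ↥(F₁ n) ↥(F₂ n) := by
  obtain ⟨h, hh, hpt⟩ := exists_h α p q hp hq hp0
  obtain ⟨h1, h2⟩ := conj_perm α π hπ g h hpt
  refine ⟨h, h1, fun n => ?_⟩
  obtain ⟨γ, f1, f2, d1, d2, hk, hi, hg⟩ := H n
  obtain ⟨a1, a2, a3, a4⟩ := hk n (Or.inl rfl)
  obtain ⟨b1, b2, b3, b4⟩ := hk (σ n) (Or.inr rfl)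
  have main := core g (AA α n) (BB α p q n) (AA α (σ n)) (BB α p q (σ n)) (Iv_clopen _ _ _)
    (BB_clopen α p q _) (Iv_clopen _ _ _) (BB_clopen α p q _) (isO_clopen _ _ (hF₁ n))
    (isO_clopen _ _ (hF₂ n)) γ f1 f2 d1 d2 (R_free α p q hp hq n _ a1 a3)
    (S_free α p q hp hq n _ a2 a4) (R_free α p q hp hq (σ n) _ b1 b3)
    (S_free α p q hp hq (σ n) _ b2 b4)
    (by rw [S_NN α p q hp hq _ _ a2 a4, S_NN α p q hp hq _ _ b2 b4, R_NN α p q hp hq _ _ a1 a3,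
          R_NN α p q hp hq _ _ b1 b3]; exact hi)
    (by rw [S_NN α p q hp hq _ _ a2 a4, S_NN α p q hp hq _ _ b2 b4]; exact hg)
  have eP : h '' Pset α π ((h.trans g).trans h.symm) n.succPNat
      = BB α p q (σ n) \ g '' BB α p q n := by
    rw [Pset, h2, hσ, Ablock_eq, Ablock_eq, Set.image_sdiff h.injective, hh, ← hh n]
    congr 1
    rw [Set.image_image, Set.image_image]
    simp
  have eQ : (h.trans g) '' Qset α π ((h.trans g).trans h.symm) n.succPNat
      = g '' BB α p q n \ BB α p q (σ n) := by
    rw [Qset, h2, hσ, Ablock_eq, Ablock_eq, Set.image_sdiff (h.trans g).injective, ← hh n, ← hh]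
    congr 1
    · rw [Set.image_image]; rfl
    · ext x
      constructor
      · rintro ⟨y, hy, rfl⟩
        exact ⟨_, hy, by simp⟩
      · rintro ⟨y, hy, rfl⟩
        exact ⟨(h.trans g).symm (h y), by simpa using hy, by simp⟩
  exact PairSim_congr ((h.image _).trans (Homeomorph.setCongr eP))
    (((h.trans g).image _).trans (Homeomorph.setCongr eQ)) main

lemma free_dp (α : Ordinal.{u}) (g : Xsp α ≃ₜ Xsp α) (m n : ℕ)
    (hg : g (pt α n.succPNat) = pt α m.succPNat) :
    (AA α m \ g '' AA α n) ∩ CB (Xsp α) α = ∅ ∧ (g '' AA α n \ AA α m) ∩ CB (Xsp α) α = ∅ := by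
  have h1 := img_inter g (AA α n) α
  rw [AA_CB, Set.image_singleton, hg, ← AA_CB] at h1
  rw [Set.eq_empty_iff_forall_notMem, Set.eq_empty_iff_forall_notMem]
  constructor
  · rintro x ⟨⟨a, b⟩, c⟩
    have : x ∈ AA α m ∩ CB (Xsp α) α := ⟨a, c⟩
    rw [← h1] at this
    exact b this.1
  · rintro x ⟨⟨a, b⟩, c⟩
    have : x ∈ g '' AA α n ∩ CB (Xsp α) α := ⟨a, c⟩
    rw [h1] at this
    exact b this.1

lemma free_f (α : Ordinal.{u}) (F : Set (OrdIcc (omega0 ^ α))) (hF : IsClopen F)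
    (hb : ∃ x : Ordinal.{u}, x < omega0 ^ α ∧ ∀ y ∈ F, (y : Ordinal) ≤ x) :
    CB F α = ∅ := by
  rw [CB_sub_empty hF.isOpen, CB_ord, Set.eq_empty_iff_forall_notMem]
  rintro y ⟨h1, h2⟩
  obtain ⟨x, hx, hx'⟩ := hb
  exact absurd (le_of_dvd (Order.one_le_iff_pos.1 y.2.1).ne' h2) (not_le.2 ((hx' y h1).trans_lt hx))

/-- partial sums over the integers -/
def zsum (w : ℤ → ℤ) : ℤ → ℤ
  | Int.ofNat n => ∑ i ∈ Finset.range n, w i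
  | Int.negSucc n => - ∑ i ∈ Finset.range (n + 1), w (Int.negSucc i)

lemma zsum_succ (w : ℤ → ℤ) (j : ℤ) : zsum w (j + 1) - zsum w j = w j := by
  match j with
  | Int.ofNat n =>
    have : (Int.ofNat n + 1 : ℤ) = Int.ofNat (n + 1) := rfl
    rw [this, zsum, zsum, Finset.sum_range_succ, add_sub_cancel_left]; rfl
  | Int.negSucc 0 =>
    have : (Int.negSucc 0 + 1 : ℤ) = Int.ofNat 0 := rfl
    rw [this, zsum, zsum]; simp
  | Int.negSucc (n + 1) =>
    have : (Int.negSucc (n + 1) + 1 : ℤ) = Int.negSucc n := rfl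
    rw [this, zsum, zsum, Finset.sum_range_succ _ (n + 1)]; ring

lemma cyc_inj (σ : Equiv.Perm ℕ) (h : ∀ m n : ℕ, ∃ j : ℤ, (σ ^ j) m = n) :
    Function.Injective (fun j : ℤ => (σ ^ j) 0) := by
  intro a b hab
  by_contra hne
  have hk : a - b ≠ 0 := sub_ne_zero.2 hne
  have h0 : (σ ^ (a - b)) 0 = 0 := by
    have e : a - b = -b + a := by ring
    rw [e, zpow_add, Equiv.Perm.mul_apply]
    have h1 : (σ ^ a) 0 = (σ ^ b) 0 := hab
    rw [h1, ← Equiv.Perm.mul_apply, ← zpow_add]; simp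
  have hfin : (Set.univ : Set ℕ).Finite := by
    refine ((Set.finite_Ico (0 : ℤ) |a - b|).image (fun j : ℤ => (σ ^ j) 0)).subset ?_
    intro n _
    obtain ⟨j, rfl⟩ := h 0 n
    refine ⟨j % (a - b), ⟨Int.emod_nonneg _ hk, Int.emod_lt_abs _ hk⟩, ?_⟩
    show (σ ^ (j % (a - b))) 0 = (σ ^ j) 0
    conv_rhs => rw [← Int.emod_add_mul_ediv j (a - b), zpow_add, Equiv.Perm.mul_apply, zpow_mul,
      Equiv.Perm.zpow_apply_eq_self_of_apply_eq_self h0]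
  exact Set.infinite_univ hfin

lemma cob (σ : Equiv.Perm ℕ) (h : ∀ m n : ℕ, ∃ j : ℤ, (σ ^ j) m = n) (w : ℕ → ℤ) :
    ∃ c : ℕ → ℤ, ∀ n, c (σ n) - c n = w n := by
  choose j hj using h 0
  refine ⟨fun n => zsum (fun i => w ((σ ^ i) 0)) (j n), fun n => ?_⟩
  have h1 : j (σ n) = j n + 1 := by
    apply cyc_inj σ h
    show (σ ^ (j (σ n))) 0 = (σ ^ (j n + 1)) 0
    rw [hj, add_comm, zpow_add, Equiv.Perm.mul_apply, hj, zpow_one]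
  have := zsum_succ (fun i => w ((σ ^ i) 0)) (j n)
  rw [← h1, hj] at this
  exact this

lemma cyc_ne (σ : Equiv.Perm ℕ) (h : ∀ m n : ℕ, ∃ j : ℤ, (σ ^ j) m = n) (n : ℕ) : σ n ≠ n := by
  intro e
  obtain ⟨j, hj⟩ := h n (n + 1)
  rw [Equiv.Perm.zpow_apply_eq_self_of_apply_eq_self e] at hj
  omega

/-- shift of a sequence of naturals -/
def pv (u : ℕ → ℕ) : ℕ → ℕ
  | 0 => 0
  | n + 1 => u n

/-- fast growing sequence -/
def yy (t : ℕ → ℤ) (L : ℕ → ℕ) : ℕ → ℕ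
  | 0 => (t 0).natAbs + L 0
  | n + 1 => (t (n + 1)).natAbs + L (n + 1) + 3 * yy t L n

lemma exists_yu (c : ℕ → ℤ) (L : ℕ → ℕ) : ∃ y u : ℕ → ℕ,
    (∀ n, ((y n + pv u n : ℕ) : ℤ) - (pv y n + u n : ℕ) = c n) ∧
    ∀ k n, k < n → y k + pv u k + L n ≤ y n + pv u n := by
  let t : ℕ → ℤ := fun n => - ∑ k ∈ Finset.range (n + 1), c k
  let y := yy t L
  let u : ℕ → ℕ := fun n => ((y n : ℤ) + t n).toNat
  have hyt : ∀ n, (t n).natAbs + L n ≤ y n := by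
    rintro (_ | n)
    · exact le_rfl
    · exact Nat.le_add_right _ _
  have hu : ∀ n, (u n : ℤ) = y n + t n := by
    intro n
    have := hyt n
    exact Int.toNat_of_nonneg (by omega)
  have hy3 : ∀ n, L (n + 1) + 3 * y n ≤ y (n + 1) := by
    intro n
    have e : y (n + 1) = (t (n + 1)).natAbs + L (n + 1) + 3 * y n := rfl
    omega
  have hmono : Monotone y := monotone_nat_of_le_succ (fun n => by have := hy3 n; omega)
  have hs : ∀ n, y n + pv u n ≤ 3 * y n := by
    rintro (_ | n)
    · simp only [pv]; omega
    · have h1 := hu n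
      have h2 := hyt n
      have h3 := hy3 n
      simp only [pv]; omega
  refine ⟨y, u, ?_, ?_⟩
  · rintro (_ | n)
    · have h1 := hu 0
      have h2 : t 0 = - c 0 := by simp [t]
      simp only [pv]; push_cast; omega
    · have h1 := hu n
      have h1' := hu (n + 1)
      have h2 : t (n + 1) = t n - c (n + 1) := by
        simp only [t]; rw [Finset.sum_range_succ _ (n + 1)]; ring
      simp only [pv]; push_cast; omega
  · rintro k (_ | n) hkn
    · omega
    · have h1 := hmono (show k ≤ n by omega)
      have h2 := hs k
      have h3 := hy3 n
      omega

lemma case_succ (β α : Ordinal.{u}) (hαβ : α = β + 1)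
    (π : (Xsp α ≃ₜ Xsp α) → Equiv.Perm ℕ+) (hπ : IsBlockPerm α π)
    (g : Xsp α ≃ₜ Xsp α) (σ : Equiv.Perm ℕ) (hσ : ∀ n : ℕ, π g n.succPNat = (σ n).succPNat)
    (hc : ∀ m n : ℕ, ∃ j : ℤ, (σ ^ j) m = n)
    (F₁ F₂ : ℕ → Set (OrdIcc (omega0 ^ α))) (hF₁ : ∀ n, IsClopen (F₁ n))
    (hF₂ : ∀ n, IsClopen (F₂ n)) (f1 : ∀ n, CB (F₁ n) α = ∅) (f2 : ∀ n, CB (F₂ n) α = ∅) :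
    ∃ h : Xsp α ≃ₜ Xsp α, π h = 1 ∧ ∀ n : ℕ,
      PairSim ↥(Pset α π ((h.trans g).trans h.symm) n.succPNat)
        ↥(Qset α π ((h.trans g).trans h.symm) n.succPNat) ↥(F₁ n) ↥(F₂ n) := by
  let K : ℕ → ℕ := fun n => NN β (AA α (σ n) \ g '' AA α n)
          + NN β (g '' AA α n \ AA α (σ n)) + (CB (F₁ n) β).ncard + (CB (F₂ n) β).ncard + 1
  obtain ⟨c, hcw⟩ := cob σ hc (fun n => ((CB (F₁ n) β).ncard : ℤ) - (CB (F₂ n) β).ncard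
    - (NN β (AA α (σ n) \ g '' AA α n) - NN β (g '' AA α n \ AA α (σ n))))
  obtain ⟨y, u, h1, h2⟩ := exists_yu c (fun n => K n + K (σ.symm n))
  have hlt : ∀ m : ℕ, omega0 ^ β * (m : Ordinal.{u}) < omega0 ^ (β + 1) := aa_lt β
  let q : ℕ → Ordinal.{u} := fun n => omega0 ^ β * (u n : Ordinal.{u})
  let p : ℕ → Ordinal.{u} := fun n => omega0 ^ β * (pv y n : Ordinal.{u})
  have hprev : ∀ n, prev q n = omega0 ^ β * (pv u n : Ordinal.{u}) := by
    rintro (_ | n)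
    · simp [prev, pv]
    · rfl
  have hpm : ∀ n, mu β (p n) = pv y n := fun n => mu_mul _ _
  have hqm : ∀ n, mu β (q n) = u n := fun n => mu_mul _ _
  have hqm' : ∀ n, mu β (prev q n) = pv u n := fun n => by rw [hprev]; exact mu_mul _ _
  have hd := fun n => free_dp α g (σ n) n (by rw [hπ g, hσ])
  refine reduce α π hπ g σ hσ F₁ F₂ hF₁ hF₂ p q (fun n => hαβ ▸ hlt _) (fun n => hαβ ▸ hlt _)
    (by simp [p, pv]) (fun n => ⟨β, hαβ ▸ f1 n, hαβ ▸ f2 n, ?_, ?_, ?_, ?_, ?_⟩)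
  · rw [← hαβ]; exact (hd n).1
  · rw [← hαβ]; exact (hd n).2
  · intro k _
    exact ⟨hlt _, hlt _, hlt _, by rw [hprev]; exact hlt _⟩
  · simp only [hpm, hqm, hqm']
    have a := h1 n
    have b := h1 (σ n)
    have d := hcw n
    simp only [pv] at *
    linarith
  · simp only [hpm, hqm, hqm']
    have e : pv y (n + 1) = y n := rfl
    have e' : pv y (σ n + 1) = y (σ n) := rfl
    rw [e, e']
    rcases lt_or_gt_of_ne (cyc_ne σ hc n) with h | h
    · right
      have := h2 _ _ h
      simp only [K] at this
      omega
    · left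
      have := h2 _ _ h
      simp only [K, Equiv.symm_apply_apply] at this
      omega

/-- increasing exponents -/
def tt (e : ℕ → Ordinal.{u}) : ℕ → Ordinal.{u}
  | 0 => e 0 + 1
  | n + 1 => max (tt e n) (e (n + 1)) + 1

lemma case_lim (α : Ordinal.{u}) (hlim : Order.IsSuccLimit α)
    (π : (Xsp α ≃ₜ Xsp α) → Equiv.Perm ℕ+) (hπ : IsBlockPerm α π)
    (g : Xsp α ≃ₜ Xsp α) (σ : Equiv.Perm ℕ) (hσ : ∀ n : ℕ, π g n.succPNat = (σ n).succPNat)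
    (hc : ∀ m n : ℕ, ∃ j : ℤ, (σ ^ j) m = n)
    (F₁ F₂ : ℕ → Set (OrdIcc (omega0 ^ α))) (hF₁ : ∀ n, IsClopen (F₁ n))
    (hF₂ : ∀ n, IsClopen (F₂ n)) (f1 : ∀ n, CB (F₁ n) α = ∅) (f2 : ∀ n, CB (F₂ n) α = ∅) :
    ∃ h : Xsp α ≃ₜ Xsp α, π h = 1 ∧ ∀ n : ℕ,
      PairSim ↥(Pset α π ((h.trans g).trans h.symm) n.succPNat)
        ↥(Qset α π ((h.trans g).trans h.symm) n.succPNat) ↥(F₁ n) ↥(F₂ n) := by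
  have hd := fun n => free_dp α g (σ n) n (by rw [hπ g, hσ])
  have cA : ∀ n, IsClopen (AA α n) := fun n => Iv_clopen _ _ _
  have cgA : ∀ n, IsClopen (g '' AA α n) := fun n =>
    ⟨g.isClosedMap _ (cA n).isClosed, g.isOpenMap _ (cA n).isOpen⟩
  have hex : ∀ n, ∃ e < α, CB (F₁ n) e = ∅ ∧ CB (F₂ n) e = ∅ ∧
      (AA α (σ n) \ g '' AA α n) ∩ CB (Xsp α) e = ∅ ∧
      (g '' AA α n \ AA α (σ n)) ∩ CB (Xsp α) e = ∅ := by
    intro n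
    have c1 := (cA (σ n)).diff (cgA n)
    have c2 := (cgA n).diff (cA (σ n))
    obtain ⟨a, ha, ha'⟩ := CB_limit (isO_clopen _ _ (hF₁ n)) hlim (f1 n)
    obtain ⟨b, hb, hb'⟩ := CB_limit (isO_clopen _ _ (hF₂ n)) hlim (f2 n)
    obtain ⟨c, hc, hc'⟩ := CB_limit (isO_clopen _ _ c1) hlim
      ((CB_sub_empty c1.isOpen _).2 (hd n).1)
    obtain ⟨d, hd, hd'⟩ := CB_limit (isO_clopen _ _ c2) hlim
      ((CB_sub_empty c2.isOpen _).2 (hd n).2)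
    refine ⟨max (max a b) (max c d), max_lt (max_lt ha hb) (max_lt hc hd), ?_, ?_, ?_, ?_⟩
    · exact Set.subset_empty_iff.1 (ha' ▸ CB_anti (by simp))
    · exact Set.subset_empty_iff.1 (hb' ▸ CB_anti (by simp))
    · exact (CB_sub_empty c1.isOpen _).1 (Set.subset_empty_iff.1 (hc' ▸ CB_anti (by simp)))
    · exact (CB_sub_empty c2.isOpen _).1 (Set.subset_empty_iff.1 (hd' ▸ CB_anti (by simp)))
  choose e he hfree using hex
  let e' : ℕ → Ordinal.{u} := fun n => max (e n) (e (σ.symm n))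
  let τ := tt e'
  have he' : ∀ n, e' n < α := fun n => max_lt (he _) (he _)
  have hτe : ∀ n, e' n < τ n := by
    rintro (_ | n)
    · exact lt_add_one _
    · exact lt_of_le_of_lt (le_max_right _ _) (lt_add_one _)
  have hτα : ∀ n, τ n < α := by
    intro n
    induction n with
    | zero => exact hlim.add_one_lt (he' 0)
    | succ n ih => exact hlim.add_one_lt (max_lt ih (he' _))
  have hτm : StrictMono τ := strictMono_nat_of_lt_succ
    (fun n => lt_of_le_of_lt (le_max_left _ _) (lt_add_one _))
  let q : ℕ → Ordinal.{u} := fun n => omega0 ^ τ n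
  have hqq : ∀ {a b : Ordinal.{u}}, a < b → omega0 ^ a < omega0 ^ b := fun h =>
    (opow_lt_opow_iff_right one_lt_omega0).2 h
  have hq : ∀ n, q n < omega0 ^ α := fun n => hqq (hτα n)
  -- key estimates at level M
  have key : ∀ M k, k < M → q k < omega0 ^ τ M := fun M k h => hqq (hτm h)
  have key' : ∀ M k, k ≤ M → prev q k < omega0 ^ τ M := by
    rintro M (_ | k) h
    · exact opow_pos _ omega0_pos
    · exact key M k h
  have up : ∀ {a x : Ordinal.{u}}, x < omega0 ^ a → x < omega0 ^ (a + 1) := fun h =>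
    h.trans (hqq (lt_add_one _))
  have mq : ∀ M, mu (τ M) (q M) = 1 := fun M => mu_opow _
  have fin : ∀ n M, (n ≤ M ∧ σ n ≤ M) → e n < τ M → ∀ k, (k = n ∨ k = σ n) →
      prev q k < omega0 ^ (τ M + 1) ∧ prev q (k + 1) < omega0 ^ (τ M + 1) ∧
        q k < omega0 ^ (τ M + 1) ∧ prev q k < omega0 ^ (τ M + 1) := by
    intro n M hM _ k hk
    have hkM : k ≤ M := by rcases hk with rfl | rfl; exacts [hM.1, hM.2]
    have hqk : q k < omega0 ^ (τ M + 1) := hqq (lt_of_le_of_lt (hτm.monotone hkM) (lt_add_one _))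
    exact ⟨up (key' M k hkM), hqk, hqk, up (key' M k hkM)⟩
  refine reduce α π hπ g σ hσ F₁ F₂ hF₁ hF₂ (prev q) q (prev_lt α q hq) hq rfl (fun n => ?_)
  obtain ⟨M, hM, heM, hcase⟩ : ∃ M, (n ≤ M ∧ σ n ≤ M) ∧ e n < τ M ∧
      ((M = σ n ∧ n < M) ∨ (M = n ∧ σ n < M)) := by
    rcases lt_or_gt_of_ne (cyc_ne σ hc n) with h | h
    · exact ⟨n, ⟨le_rfl, h.le⟩, lt_of_le_of_lt (le_max_left _ _) (hτe n), Or.inr ⟨rfl, h⟩⟩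
    · refine ⟨σ n, ⟨h.le, le_rfl⟩, lt_of_le_of_lt ?_ (hτe (σ n)), Or.inl ⟨rfl, h⟩⟩
      simp [e']
  obtain ⟨g1, g2, g3, g4⟩ := hfree n
  have an : ∀ {Y : Type (u + 1)} [TopologicalSpace Y] {a : Ordinal.{u}}, e n ≤ a → CB Y (e n) = ∅ →
      CB Y a = ∅ := fun h h' => Set.subset_empty_iff.1 (h' ▸ CB_anti h)
  have an' : ∀ {E : Set (Xsp α)} {a : Ordinal.{u}}, e n ≤ a → E ∩ CB (Xsp α) (e n) = ∅ →
      E ∩ CB (Xsp α) a = ∅ := fun h h' => Set.subset_empty_iff.1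
        (h' ▸ Set.inter_subset_inter_right _ (CB_anti h))
  have l1 : e n ≤ τ M := heM.le
  have l2 : e n ≤ τ M + 1 := l1.trans (lt_add_one _).le
  have z1 : NN (τ M) (AA α (σ n) \ g '' AA α n) = 0 := by rw [NN, an' l1 g3, Set.ncard_empty]
  have z2 : NN (τ M) (g '' AA α n \ AA α (σ n)) = 0 := by rw [NN, an' l1 g4, Set.ncard_empty]
  refine ⟨τ M, an l2 g1, an l2 g2, an' l2 g3, an' l2 g4, fin n M hM heM, ?_, ?_⟩
  · rw [z1, z2, an l1 g1, an l1 g2]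
    simp only [prev]; push_cast; simp; ring
  · rw [z1, z2, an l1 g1, an l1 g2, mu_of_lt (key' M n hM.1), mu_of_lt (key' M (σ n) hM.2)]
    have w1 : prev q (n + 1) = q n := rfl
    have w2 : prev q (σ n + 1) = q (σ n) := rfl
    rw [w1, w2]
    rcases hcase with ⟨h, h'⟩ | ⟨h, h'⟩
    · left
      rw [mu_of_lt (key M n h'), ← h, mq]; simp
    · right
      rw [mu_of_lt (key M (σ n) h'), ← h, mq]; simp

lemma case_zero (π : (Xsp (0 : Ordinal.{u}) ≃ₜ Xsp 0) → Equiv.Perm ℕ+) (hπ : IsBlockPerm 0 π)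
    (g : Xsp (0 : Ordinal.{u}) ≃ₜ Xsp 0) (σ : Equiv.Perm ℕ)
    (hσ : ∀ n : ℕ, π g n.succPNat = (σ n).succPNat)
    (F₁ F₂ : ℕ → Set (OrdIcc (omega0 ^ (0 : Ordinal.{u}))))
    (f1 : ∀ n, CB (F₁ n) (0 : Ordinal.{u}) = ∅) (f2 : ∀ n, CB (F₂ n) (0 : Ordinal.{u}) = ∅) :
    ∃ h : Xsp (0 : Ordinal.{u}) ≃ₜ Xsp 0, π h = 1 ∧ ∀ n : ℕ,
      PairSim ↥(Pset 0 π ((h.trans g).trans h.symm) n.succPNat)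
        ↥(Qset 0 π ((h.trans g).trans h.symm) n.succPNat) ↥(F₁ n) ↥(F₂ n) := by
  refine ⟨Homeomorph.refl _, (conj_perm 0 π hπ g (Homeomorph.refl _) (fun _ => rfl)).1, fun n => ?_⟩
  have hk : ((Homeomorph.refl (Xsp (0 : Ordinal.{u}))).trans g).trans
    (Homeomorph.refl (Xsp (0 : Ordinal.{u}))).symm = g := by ext; rfl
  rw [hk]
  have hd := free_dp 0 g (σ n) n (by rw [hπ g, hσ])
  have hu : CB (Xsp (0 : Ordinal.{u})) 0 = Set.univ := by
    rw [CB_ord]; ext x; simp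
  rw [hu, Set.inter_univ, Set.inter_univ] at hd
  have hF : ∀ F : Set (OrdIcc (omega0 ^ (0 : Ordinal.{u}))), CB F (0 : Ordinal.{u}) = ∅ → IsEmpty F := by
    intro F h
    refine ⟨fun x => ?_⟩
    have : x ∈ CB F (0 : Ordinal.{u}) := by
      rw [mem_CB]; intro b hb; exact absurd hb (not_lt.2 (zero_le))
    rw [h] at this; exact this
  have := hF _ (f1 n)
  have := hF _ (f2 n)
  have hP : IsEmpty ↥(Pset 0 π g n.succPNat) := by
    rw [Pset, hσ, Ablock_eq, Ablock_eq, hd.1]; infer_instance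
  have hQ : IsEmpty ↥(Qset 0 π g n.succPNat) := by
    rw [Qset, hσ, Ablock_eq, Ablock_eq]
    refine ⟨fun x => ?_⟩
    have : g x ∈ g '' AA 0 n \ AA 0 (σ n) := ⟨⟨_, x.2.1, rfl⟩, x.2.2⟩
    rw [hd.2] at this; exact this
  exact ⟨Homeomorph.empty⟩

theorem main_aux (α : Ordinal.{u}) (hα : α.card ≤ Cardinal.aleph0)
    (π : (Xsp α ≃ₜ Xsp α) → Equiv.Perm ℕ+) (hπ : IsBlockPerm α π)
    (g : Xsp α ≃ₜ Xsp α)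
    (hcycle : ∀ m n : ℕ+, ∃ j : ℤ, ((π g) ^ j) m = n)
    (f : ℕ+ → Set (OrdIcc (omega0 ^ α)) × Set (OrdIcc (omega0 ^ α)))
    (hf : ∀ i : ℕ+, IsClopen (f i).1 ∧ IsClopen (f i).2 ∧
      (∃ x : Ordinal, x < omega0 ^ α ∧ ∀ y ∈ (f i).1, (y : Ordinal) ≤ x) ∧
      (∃ x : Ordinal, x < omega0 ^ α ∧ ∀ y ∈ (f i).2, (y : Ordinal) ≤ x)) :
    ∃ h : Xsp α ≃ₜ Xsp α, π h = 1 ∧ ∀ i : ℕ+,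
      PairSim ↥(Pset α π ((h.trans g).trans h.symm) i)
        ↥(Qset α π ((h.trans g).trans h.symm) i) ↥((f i).1) ↥((f i).2) := by
  let φ : ℕ+ ≃ ℕ := Equiv.pnatEquivNat
  have hφ : ∀ n : ℕ, φ.symm n = n.succPNat := fun n => rfl
  let σ : Equiv.Perm ℕ := φ.permCongr (π g)
  have hσ0 : ∀ n, σ n = φ (π g (φ.symm n)) := fun n => rfl
  have hσ : ∀ n : ℕ, π g n.succPNat = (σ n).succPNat := fun n => by
    rw [← hφ, ← hφ, hσ0, Equiv.symm_apply_apply]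
  have hpow : ∀ (j : ℤ) (m : ℕ), (σ ^ j) m = φ (((π g) ^ j) (φ.symm m)) := by
    intro j m
    have h1 : φ.permCongrHom ((π g) ^ j) = (φ.permCongrHom (π g)) ^ j := map_zpow _ _ _
    have h2 := congrArg (fun e : Equiv.Perm ℕ => e m) h1
    exact h2.symm
  have hc : ∀ m n : ℕ, ∃ j : ℤ, (σ ^ j) m = n := by
    intro m n
    obtain ⟨j, hj⟩ := hcycle (φ.symm m) (φ.symm n)
    exact ⟨j, by rw [hpow, hj, Equiv.apply_symm_apply]⟩
  have hF₁ : ∀ n : ℕ, IsClopen (f n.succPNat).1 := fun n => (hf _).1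
  have hF₂ : ∀ n : ℕ, IsClopen (f n.succPNat).2 := fun n => (hf _).2.1
  have f1 : ∀ n : ℕ, CB (f n.succPNat).1 α = ∅ := fun n => free_f α _ (hF₁ n) (hf _).2.2.1
  have f2 : ∀ n : ℕ, CB (f n.succPNat).2 α = ∅ := fun n => free_f α _ (hF₂ n) (hf _).2.2.2
  suffices h : ∃ h : Xsp α ≃ₜ Xsp α, π h = 1 ∧ ∀ n : ℕ,
      PairSim ↥(Pset α π ((h.trans g).trans h.symm) n.succPNat)
        ↥(Qset α π ((h.trans g).trans h.symm) n.succPNat) ↥(f n.succPNat).1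
        ↥(f n.succPNat).2 by
    obtain ⟨h, h1, h2⟩ := h
    refine ⟨h, h1, fun i => ?_⟩
    have := h2 i.natPred
    rwa [PNat.succPNat_natPred i] at this
  rcases Ordinal.zero_or_succ_or_isSuccLimit α with h0 | ⟨β, h0⟩ | h0
  · subst h0
    exact case_zero π hπ g σ hσ _ _ f1 f2
  · exact case_succ β α (by rw [← h0]; simp) π hπ g σ hσ hc _ _ hF₁ hF₂ f1 f2
  · exact case_lim α h0 π hπ g σ hσ hc _ _ hF₁ hF₂ f1 f2

/-- If `σ = π(g)` acts on `{1,2,…}` as a single infinite cycle, and `f`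
assigns to each `i ≥ 1` an ordered pair of bounded clopen subsets of `[1, ω^α]`, then there
is `h` in the kernel of `π` with `(P_i(h⁻¹gh), Q_i(h⁻¹gh)) ∼ f(i)` for every `i`.
(The conjugate `h⁻¹gh`, acting by `x ↦ h⁻¹(g(h(x)))`, is `(h.trans g).trans h.symm`.) -/
theorem pair_data_realized_by_conjugate (α : Ordinal) (hα : α.card ≤ Cardinal.aleph0)
    (π : (Xsp α ≃ₜ Xsp α) → Equiv.Perm ℕ+) (hπ : IsBlockPerm α π)
    (g : Xsp α ≃ₜ Xsp α)
    (hcycle : ∀ m n : ℕ+, ∃ j : ℤ, ((π g) ^ j) m = n)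
    (f : ℕ+ → Set (OrdIcc (omega0 ^ α)) × Set (OrdIcc (omega0 ^ α)))
    (hf : ∀ i : ℕ+, IsClopen (f i).1 ∧ IsClopen (f i).2 ∧
      (∃ x : Ordinal, x < omega0 ^ α ∧ ∀ y ∈ (f i).1, (y : Ordinal) ≤ x) ∧
      (∃ x : Ordinal, x < omega0 ^ α ∧ ∀ y ∈ (f i).2, (y : Ordinal) ≤ x)) :
    ∃ h : Xsp α ≃ₜ Xsp α, π h = 1 ∧ ∀ i : ℕ+,
      PairSim ↥(Pset α π ((h.trans g).trans h.symm) i)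
        ↥(Qset α π ((h.trans g).trans h.symm) i) ↥((f i).1) ↥((f i).2) := by
  exact main_aux α hα π hπ g hcycle f hf
end
end

section
/- Let α be a countable ordinal, δ = ω^(α+1), X = [1, δ] with the order topology, and G the group of homeomorphisms of X. Then: (i) for every g ∈ G and every integer m ≥ 1 there is a unique integer n ≥ 1 with g(ω^α·m) = ω^α·n; (ii) the resulting map π(g), sending m to this n, is a permutation of {1,2,…}; (iii) π : G → Sym({1,2,…}) is a group homomorphism; and (iv) the kernel of π equals the pointwise stabilizer in G of the set {ω^α·n : 1 ≤ n ≤ ω} (which includes δ = ω^α·ω). -/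
open Ordinal Topology

noncomputable section

lemma aux_dvd_of_acc (β x : Ordinal) (hx : 0 < x)
    (h : ∀ a < x, ∃ y, a < y ∧ y ≤ x ∧ y ≠ x ∧ omega0 ^ β ∣ y) : omega0 ^ (β + 1) ∣ x := by
  have hb : 0 < omega0 ^ β := opow_pos _ omega0_pos
  have key : ∀ q : Ordinal, omega0 ^ β * q < x → omega0 ^ β * (q + 1) < x := by
    intro q hq
    obtain ⟨y, h1, h2, h3, c, rfl⟩ := h _ hq
    have hqc : q < c := (mul_lt_mul_iff_right₀ hb).1 h1
    have : q + 1 ≤ c := Order.add_one_le_of_lt hqc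
    exact lt_of_le_of_lt (mul_le_mul' le_rfl this) (lt_of_le_of_ne h2 h3)
  have hx1 : omega0 ^ β * (x / omega0 ^ β) ≤ x := Ordinal.mul_div_le _ _
  have hx2 : x < omega0 ^ β * (x / omega0 ^ β + 1) := by
    have := Ordinal.lt_mul_succ_div x hb.ne'
    simpa using this
  have heq : omega0 ^ β * (x / omega0 ^ β) = x := by
    by_contra hne
    exact absurd (key _ (lt_of_le_of_ne hx1 hne)) hx2.not_gt
  obtain ⟨q, hq⟩ : ∃ q, q = x / omega0 ^ β := ⟨_, rfl⟩
  rw [← hq] at heq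
  have hq0 : q ≠ 0 := by
    intro h0
    rw [h0, mul_zero] at heq
    exact hx.ne heq
  have hlim : Order.IsSuccLimit q := by
    rw [Ordinal.isSuccLimit_iff]
    refine ⟨hq0, ?_⟩
    rw [Order.isSuccPrelimit_iff_succ_lt]
    intro b hbq
    have := key b (by rw [← heq]; exact (mul_lt_mul_iff_right₀ hb).2 hbq)
    rw [← heq] at this
    exact (mul_lt_mul_iff_right₀ hb).1 this
  obtain ⟨c, hc⟩ := (Ordinal.isSuccLimit_iff_omega0_dvd.1 hlim).2
  refine ⟨c, ?_⟩
  rw [← heq, hc, ← mul_assoc, Ordinal.add_one_eq_succ, Ordinal.opow_succ]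

lemma aux_acc_of_dvd (β x : Ordinal) (hx : 0 < x) (h : omega0 ^ (β + 1) ∣ x) :
    ∀ a < x, ∃ y, a < y ∧ y < x ∧ omega0 ^ β ∣ y := by
  intro a ha
  obtain ⟨c, rfl⟩ := h
  have hb : 0 < omega0 ^ β := opow_pos _ omega0_pos
  rw [Ordinal.add_one_eq_succ, Ordinal.opow_succ, mul_assoc] at ha hx ⊢
  have hl : Order.IsSuccLimit (omega0 * c) := by
    rw [Ordinal.isSuccLimit_iff_omega0_dvd]
    refine ⟨?_, dvd_mul_right _ _⟩
    intro h0
    simp [h0] at hx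
  obtain ⟨d, hd, had⟩ := (Ordinal.lt_mul_iff_of_isSuccLimit hl).1 ha
  exact ⟨_, had, (mul_lt_mul_iff_right₀ hb).2 hd, dvd_mul_right _ _⟩

lemma aux_closure {γ : Ordinal} (β : Ordinal) (x : OrdIcc γ) :
    x ∈ closure ({y : OrdIcc γ | omega0 ^ β ∣ (y : Ordinal)} \ {x}) ↔
      omega0 ^ (β + 1) ∣ (x : Ordinal) := by
  have hx0 : (0 : Ordinal) < x := lt_of_lt_of_le zero_lt_one x.2.1
  constructor
  · intro h
    refine aux_dvd_of_acc β x hx0 ?_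
    intro a ha
    have ho : IsOpen {y : OrdIcc γ | a < (y : Ordinal) ∧ (y : Ordinal) < x + 1} :=
      (isOpen_lt continuous_const continuous_subtype_val).inter
        (isOpen_lt continuous_subtype_val continuous_const)
    obtain ⟨y, ⟨h1, h2⟩, h3, h4⟩ := mem_closure_iff.1 h _ ho ⟨ha, Order.lt_add_one_iff.2 le_rfl⟩
    exact ⟨y, h1, Order.lt_add_one_iff.1 h2, fun e => h4 (Subtype.ext e), h3⟩
  · intro h
    rw [mem_closure_iff_nhds]
    intro t ht
    rw [mem_nhds_subtype] at ht
    obtain ⟨u, hu, hut⟩ := ht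
    obtain ⟨l, hl, hlu⟩ := exists_Ioc_subset_of_mem_nhds hu ⟨0, hx0⟩
    obtain ⟨y, h1, h2, h3⟩ := aux_acc_of_dvd β x hx0 h l hl
    have hy1 : 1 ≤ y := Order.one_le_iff_pos.2 (lt_of_le_of_lt (zero_le) h1)
    refine ⟨⟨y, hy1, h2.le.trans x.2.2⟩, hut (hlu ⟨h1, h2.le⟩), h3, ?_⟩
    intro e
    exact h2.ne (congrArg Subtype.val e)

lemma aux_dvd_limit (β x : Ordinal) (hβ : Order.IsSuccLimit β)
    (h : ∀ γ < β, omega0 ^ γ ∣ x) : omega0 ^ β ∣ x := by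
  rw [Ordinal.dvd_iff_mod_eq_zero]
  by_contra hr
  have hlt : x % omega0 ^ β < omega0 ^ β := Ordinal.mod_lt _ (opow_pos _ omega0_pos).ne'
  obtain ⟨γ, hγ, hlt'⟩ := (Ordinal.lt_opow_of_isSuccLimit omega0_ne_zero hβ).1 hlt
  have h1 : omega0 ^ γ ∣ omega0 ^ β * (x / omega0 ^ β) :=
    (Ordinal.opow_dvd_opow _ hγ.le).mul_right _
  have h2 : omega0 ^ γ ∣ omega0 ^ β * (x / omega0 ^ β) + x % omega0 ^ β := by
    rw [Ordinal.div_add_mod]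
    exact h γ hγ
  have h3 := (Ordinal.dvd_add_iff h1).1 h2
  exact absurd (Ordinal.le_of_dvd hr h3) hlt'.not_ge

lemma aux_inv {γ : Ordinal} (g : OrdIcc γ ≃ₜ OrdIcc γ) (β : Ordinal) :
    ∀ x : OrdIcc γ, omega0 ^ β ∣ (x : Ordinal) → omega0 ^ β ∣ (g x : Ordinal) := by
  induction β using Ordinal.limitRecOn with
  | zero => intro x _; simp
  | add_one β ih =>
    intro x hx
    rw [← aux_closure] at hx ⊢
    have := image_closure_subset_closure_image g.continuous (Set.mem_image_of_mem g hx)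
    refine closure_mono ?_ this
    rintro _ ⟨y, ⟨hy1, hy2⟩, rfl⟩
    exact ⟨ih y hy1, fun e => hy2 (g.injective e)⟩
  | limit β hβ ih =>
    intro x hx
    exact aux_dvd_limit β _ hβ fun δ hδ => ih δ hδ x ((Ordinal.opow_dvd_opow _ hδ.le).trans hx)

lemma aux_pt_inj (α : Ordinal) : Function.Injective (pt α) := by
  intro m n h
  have hb : 0 < omega0 ^ α := opow_pos _ omega0_pos
  have h1 : omega0 ^ α * ((m : ℕ) : Ordinal) = omega0 ^ α * ((n : ℕ) : Ordinal) :=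
    congrArg Subtype.val h
  have h2 : ((m : ℕ) : Ordinal) = ((n : ℕ) : Ordinal) := by
    apply le_antisymm
    · exact (mul_le_mul_iff_right₀ hb).1 h1.le
    · exact (mul_le_mul_iff_right₀ hb).1 h1.ge
  exact PNat.coe_injective (Nat.cast_injective h2)

lemma aux_pt_of (α : Ordinal) (x : Xsp α) (n : Ordinal) (hn : n < omega0)
    (h : (x : Ordinal) = omega0 ^ α * n) : ∃ m : ℕ+, x = pt α m := by
  obtain ⟨k, rfl⟩ := Ordinal.lt_omega0.1 hn
  have hk : 0 < k := by
    rcases Nat.eq_zero_or_pos k with rfl | hk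
    · have := x.2.1
      rw [h] at this
      simp at this
    · exact hk
  exact ⟨⟨k, hk⟩, Subtype.ext h⟩

lemma aux_exists (α : Ordinal) (g : Xsp α ≃ₜ Xsp α) (m : ℕ+) : ∃ n : ℕ+, g (pt α m) = pt α n := by
  have hb : 0 < omega0 ^ α := opow_pos _ omega0_pos
  obtain ⟨c, hc⟩ := aux_inv g α (pt α m) (dvd_mul_right _ _)
  refine aux_pt_of α _ c ?_ hc
  have hle := (g (pt α m)).2.2
  have e : omega0 ^ (α + 1) = omega0 ^ α * omega0 := by
    rw [Ordinal.add_one_eq_succ, Ordinal.opow_succ]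
  rw [hc, e, mul_le_mul_iff_right₀ hb] at hle
  refine lt_of_le_of_ne hle ?_
  rintro rfl
  have h2 := aux_inv g.symm (α + 1) (g (pt α m)) (by rw [hc, e])
  rw [g.symm_apply_apply] at h2
  have h3 := Ordinal.le_of_dvd (lt_of_lt_of_le zero_lt_one (pt α m).2.1).ne' h2
  have h4 : omega0 ^ α * omega0 ≤ omega0 ^ α * ((m : ℕ) : Ordinal) := e.symm.le.trans h3
  exact absurd ((mul_le_mul_iff_right₀ hb).1 h4) (Ordinal.nat_lt_omega0 m).not_ge

/-- (i) For every `g ∈ G` and `m ≥ 1` there is a unique `n ≥ 1` with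
`g(ω^α·m) = ω^α·n`; (ii) for any map `π` satisfying the resulting defining property, each
`π(g)` is a permutation of `{1,2,…}`; (iii) `π` is a group homomorphism (it turns composition
`hg : x ↦ h(g(x))`, i.e. `g.trans h`, into composition of permutations); and (iv) the kernel
of `π` is the pointwise stabilizer of `{ω^α·n : 1 ≤ n ≤ ω}` (which includes `δ = ω^α·ω`). -/
theorem pi_well_defined_hom_ker (α : Ordinal) (hα : α.card ≤ Cardinal.aleph0) :
    (∀ (g : Xsp α ≃ₜ Xsp α) (m : ℕ+), ∃! n : ℕ+, g (pt α m) = pt α n) ∧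
    ∀ π : (Xsp α ≃ₜ Xsp α) → ℕ+ → ℕ+,
      (∀ (g : Xsp α ≃ₜ Xsp α) (m : ℕ+), g (pt α m) = pt α (π g m)) →
      (∀ g : Xsp α ≃ₜ Xsp α, Function.Bijective (π g)) ∧
      (∀ g h : Xsp α ≃ₜ Xsp α, π (g.trans h) = π h ∘ π g) ∧
      (∀ g : Xsp α ≃ₜ Xsp α,
        (∀ m : ℕ+, π g m = m) ↔
        (∀ x : Xsp α,
          (∃ n : Ordinal, 1 ≤ n ∧ n ≤ omega0 ∧ (x : Ordinal) = omega0 ^ α * n) → g x = x)) := by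
  refine ⟨?_, ?_⟩
  · intro g m
    obtain ⟨n, hn⟩ := aux_exists α g m
    exact ⟨n, hn, fun k hk => aux_pt_inj α (hk.symm.trans hn)⟩
  · intro π hπ
    refine ⟨?_, ?_, ?_⟩
    · intro g
      refine ⟨?_, ?_⟩
      · intro m n h
        apply aux_pt_inj α
        apply g.injective
        rw [hπ, hπ, h]
      · intro n
        obtain ⟨m, hm⟩ := aux_exists α g.symm n
        refine ⟨m, aux_pt_inj α ?_⟩
        rw [← hπ, ← hm, g.apply_symm_apply]
    · intro g h
      funext m
      apply aux_pt_inj α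
      rw [← hπ, Homeomorph.trans_apply, hπ, hπ]
      rfl
    · intro g
      constructor
      · rintro h x ⟨n, -, hn, hx⟩
        rcases hn.lt_or_eq with hn | rfl
        · obtain ⟨m, rfl⟩ := aux_pt_of α x n hn hx
          rw [hπ, h]
        · have e : (x : Ordinal) = omega0 ^ (α + 1) := by
            rw [hx, Ordinal.add_one_eq_succ, Ordinal.opow_succ]
          have h1 := aux_inv g (α + 1) x (by rw [e])
          have h2 := Ordinal.le_of_dvd (lt_of_lt_of_le zero_lt_one (g x).2.1).ne' h1
          apply Subtype.ext
          rw [e]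
          exact le_antisymm (g x).2.2 h2
      · intro h m
        apply aux_pt_inj α
        rw [← hπ]
        refine h _ ⟨((m : ℕ) : Ordinal), ?_, (Ordinal.nat_lt_omega0 m).le, rfl⟩
        exact_mod_cast m.one_le
end
end

section
/- If α and β are successor ordinals, then the ordinal α + β and the ordinal β + α (ordinal addition), each regarded as the set of ordinals below it equipped with the order topology, are homeomorphic topological spaces. -/
open Ordinal Topology

theorem aux_homeo (α β : Ordinal)
    (hα : ∃ γ, α = γ + 1) (hβ : ∃ γ, β = γ + 1) :
    Nonempty ((↥(Set.Iio α) ⊕ ↥(Set.Iio β)) ≃ₜ ↥(Set.Iio (α + β))) := by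
  have key : ∀ δ : Ordinal, (∃ γ, δ = γ + 1) → CompactSpace ↥(Set.Iio δ) := by
    rintro δ ⟨γ, rfl⟩
    rw [← isCompact_iff_compactSpace]
    have : Set.Iio (γ + 1) = Set.Icc 0 γ := by
      ext x
      simp
    rw [this]
    exact isCompact_Icc
  have := key α hα
  have := key β hβ
  let f : (↥(Set.Iio α) ⊕ ↥(Set.Iio β)) → ↥(Set.Iio (α + β)) :=
    Sum.elim (fun x => ⟨x.1, Set.mem_Iio.2 (lt_of_lt_of_le (Set.mem_Iio.1 x.2) le_self_add)⟩)
      (fun x => ⟨α + x.1, Set.mem_Iio.2 ((add_lt_add_iff_left α).2 (Set.mem_Iio.1 x.2))⟩)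
  have hf : Continuous f := by
    refine Continuous.sumElim ?_ ?_
    · exact Continuous.subtype_mk continuous_subtype_val _
    · exact Continuous.subtype_mk
        ((isNormal_add_right α).continuous.comp continuous_subtype_val) _
  have hb : Function.Bijective f := by
    constructor
    · rintro (⟨x, hx⟩ | ⟨x, hx⟩) (⟨y, hy⟩ | ⟨y, hy⟩) h
      · simpa [f] using h
      · have h' : x = α + y := congrArg Subtype.val h
        exact absurd (h' ▸ hx : α + y < α) (not_lt.2 le_self_add)
      · have h' : α + x = y := congrArg Subtype.val h
        exact absurd (h'.symm ▸ hy : α + x < α) (not_lt.2 le_self_add)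
      · simpa [f] using h
    · rintro ⟨y, hy⟩
      rcases lt_or_ge y α with h | h
      · exact ⟨Sum.inl ⟨y, h⟩, rfl⟩
      · have e := Ordinal.add_sub_cancel_of_le h
        refine ⟨Sum.inr ⟨y - α, ?_⟩, Subtype.ext e⟩
        have hy' : y < α + β := hy
        rw [← e] at hy'
        exact (add_lt_add_iff_left α).1 hy'
  exact ⟨Continuous.homeoOfEquivCompactToT2 (f := Equiv.ofBijective f hb) hf⟩

/-- If `α` and `β` are successor ordinals, then `α + β` and `β + α`
(each regarded as the set of ordinals below it, with the order topology, i.e. the subspace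
topology induced from the order topology on `Ordinal`) are homeomorphic. -/
theorem add_comm_homeomorph_of_succ (α β : Ordinal)
    (hα : ∃ γ, α = γ + 1) (hβ : ∃ γ, β = γ + 1) :
    Nonempty (↥(Set.Iio (α + β)) ≃ₜ ↥(Set.Iio (β + α))) := by
  obtain ⟨e⟩ := aux_homeo α β hα hβ
  obtain ⟨e'⟩ := aux_homeo β α hβ hα
  exact ⟨e.symm.trans ((Homeomorph.sumComm _ _).trans e')⟩
end

section
/- Let α be a countable ordinal, δ = ω^(α+1), X = [1, δ] with the order topology, G the group of homeomorphisms of X, A_n = [ω^α·(n−1)+1, ω^α·n] for n ≥ 1, and π : G → Sym({1,2,…}) the homomorphism determined by π(g)(m) = n iff g(ω^α·m) = ω^α·n. Then for every g ∈ G and every i ≥ 1, the sets P_i(g) = A_{π(g)(i)} \ g(A_i) and Q_i(g) = A_i \ g⁻¹(A_{π(g)(i)}) are clopen in X, P_i(g) is a bounded subset of A_{π(g)(i)}, and Q_i(g) is a bounded subset of A_i. -/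
open Ordinal Topology

noncomputable section

/-- A subset `S` of `A_i` is bounded if it is contained in `[ω^α·(i−1)+1, x]`
for some `x < ω^α·i`. -/
def BoundedIn (α : Ordinal) (i : ℕ+) (S : Set (Xsp α)) : Prop :=
  ∃ x : Ordinal, x < omega0 ^ α * ((i : ℕ) : Ordinal) ∧
    ∀ y ∈ S, (y : Ordinal) ∈ Set.Icc (omega0 ^ α * (((i : ℕ) - 1 : ℕ) : Ordinal) + 1) x

lemma Ablock_isClopen (α : Ordinal) (n : ℕ+) : IsClopen (Ablock α n) := by
  constructor
  · exact isClosed_Icc.preimage continuous_subtype_val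
  · have : Ablock α n = Subtype.val ⁻¹' (Set.Ioo (omega0 ^ α * (((n : ℕ) - 1 : ℕ) : Ordinal))
        (Order.succ (omega0 ^ α * ((n : ℕ) : Ordinal)))) := by
      ext x
      simp only [Ablock, Set.mem_setOf_eq, Set.mem_Icc, Set.mem_preimage, Set.mem_Ioo,
        Order.lt_succ_iff, Order.add_one_le_iff]
    rw [this]
    exact isOpen_Ioo.preimage continuous_subtype_val

lemma pt_mem_Ablock (α : Ordinal) (n : ℕ+) : pt α n ∈ Ablock α n := by
  refine ⟨?_, le_rfl⟩
  rw [Order.add_one_le_iff]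
  refine (mul_lt_mul_iff_right₀ (opow_pos _ omega0_pos)).2 ?_
  exact_mod_cast Nat.sub_lt n.pos one_pos

lemma boundedIn_of_clopen (α : Ordinal) (n : ℕ+) (S : Set (Xsp α)) (hS : IsClopen S)
    (hsub : S ⊆ Ablock α n) (hn : pt α n ∉ S) : BoundedIn α n S := by
  have h1 : Sᶜ ∈ 𝓝 (pt α n) := hS.compl.isOpen.mem_nhds hn
  rw [nhds_subtype, Filter.mem_comap] at h1
  obtain ⟨t, ht, hts⟩ := h1
  have hpos : (0 : Ordinal) < (pt α n : Ordinal) :=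
    lt_of_lt_of_le zero_lt_one (pt α n).2.1
  obtain ⟨x, hx, hxt⟩ := exists_Ioc_subset_of_mem_nhds ht ⟨0, hpos⟩
  refine ⟨x, hx, fun y hy => ⟨(hsub hy).1, ?_⟩⟩
  by_contra hlt
  exact hts (show y ∈ Subtype.val ⁻¹' t from hxt ⟨not_le.1 hlt, (hsub hy).2⟩) hy

/-- For every `g ∈ G` and `i ≥ 1`, the sets `P_i(g) = A_{π(g)(i)} \ g(A_i)`
and `Q_i(g) = A_i \ g⁻¹(A_{π(g)(i)})` are clopen in `X`, `P_i(g)` is a bounded subset of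
`A_{π(g)(i)}`, and `Q_i(g)` is a bounded subset of `A_i`. -/
theorem Pset_Qset_clopen_bounded (α : Ordinal) (hα : α.card ≤ Cardinal.aleph0)
    (π : (Xsp α ≃ₜ Xsp α) → Equiv.Perm ℕ+) (hπ : IsBlockPerm α π)
    (g : Xsp α ≃ₜ Xsp α) (i : ℕ+) :
    IsClopen (Pset α π g i) ∧ IsClopen (Qset α π g i) ∧
    BoundedIn α (π g i) (Pset α π g i) ∧ BoundedIn α i (Qset α π g i) := by
  have hP : IsClopen (Pset α π g i) :=
    (Ablock_isClopen α _).diff ⟨g.isClosedMap _ (Ablock_isClopen α i).1, g.isOpenMap _ (Ablock_isClopen α i).2⟩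
  have hQ : IsClopen (Qset α π g i) :=
    (Ablock_isClopen α _).diff ((Ablock_isClopen α _).preimage g.continuous)
  refine ⟨hP, hQ, boundedIn_of_clopen α _ _ hP Set.diff_subset ?_,
    boundedIn_of_clopen α _ _ hQ Set.diff_subset ?_⟩
  · exact fun h => h.2 ⟨pt α i, pt_mem_Ablock α i, hπ g i⟩
  · refine fun h => h.2 ?_
    rw [Set.mem_preimage, hπ g i]
    exact pt_mem_Ablock α _
end
end
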